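/- Example 2 (degraded message sets, Coding scheme 1 strictly outperforms Coding scheme 2): Consider the binary SD-MAWC with degraded message sets, causal CSI at both encoders, Y = X1 when S = 0 and Y = X2 when S = 1, Z = X1, and Pr{S=1} = p = 0.8. Then: (i) for every admissible joint law, I(U1;Y|S,U,U2) <= I(U1;Z|S,U,U2), so the Coding scheme 1 region reduces to R^{CSI-E}_{D,12} and the Coding scheme 2 region reduces to R^{CSI-E}_{D,22}; (ii) choosing V = S, U empty, U1 = X1 with Pr{X1=0} = 0.2 and U2 = X2 with Pr{X2=0} = 0.8, R^{CSI-E}_{D,12} contains a point with R1 = min{I(S;Y), I(X1;Y|X2,S)} = min{0.182..., 0.144...} = 0.144... = 0.2*h(0.2), whereas every point of R^{CSI-E}_{D,22} satisfies R1 <= log2(1 + (1-p) * p^{p/(1-p)}) = 0.114...; (iii) the sum-rate bound of R^{CSI-E}_{D,12} with V = S equals I(U,U1,U2;Y) - H(S|Y,U,U1,U2) and thus covers the sum-rate bound of R^{CSI-E}_{D,22}, and consequently R^{CSI-E}_{D,22} is included in R^{CSI-E}_{D,12} for this channel. -/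

import Mathlib

/-!
The auxiliary variables are independent of the state, and conditionally on `(U, U1, U2, S)` the
output `Y` is a copy of `Z = X1` if `S = 0` and has a law not depending on `U1` if `S = 1`.
Conditional mutual information is an average of Jensen gaps of entropy, so comparing the gaps state
by state shows that `U1` is never better known at `Y` than at `Z`.

In scheme 2, the independence of `S` and `(U, U1, U2)` turns the second bound on `R1` into
`H(Y|U,U2) - H(S) - H(Y|S,U,U1,U2)`. Given `(U, U2)`, the law of `Y` is a mixture of binary laws
with weights `1 - p` and `p`, and for `p ≥ 1/2` such a mixture satisfies
`h((1-p)a + pb) ≤ h(p) + p h(b)`. Hence scheme 2 carries no confidential message at all, and what it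
does achieve is achieved by scheme 1 with `V` constant. Uncoded transmission with `V = S` gives
scheme 1 a positive confidential rate.
-/

open scoped BigOperators

noncomputable section

namespace Paper

/-- `p` is a probability mass function on the finite type `α`. -/
def IsPmf {α : Type*} [Fintype α] (p : α → ℝ) : Prop :=
  (∀ a, 0 ≤ p a) ∧ ∑ a, p a = 1

/-- `k` is a conditional pmf (a channel / stochastic kernel). -/
def IsKernel {α β : Type*} [Fintype β] (k : α → β → ℝ) : Prop :=
  ∀ a, IsPmf (k a)

/-- Shannon entropy (base 2) of a mass function on a finite type. -/
def ent {α : Type*} [Fintype α] (p : α → ℝ) : ℝ :=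
  -∑ a, p a * Real.logb 2 (p a)

/-- Law (pushforward) of the random variable `X` under the mass function `p`. -/
def law {Ω α : Type*} [Fintype Ω] [DecidableEq α] (p : Ω → ℝ) (X : Ω → α) :
    α → ℝ := fun a => ∑ ω, if X ω = a then p ω else 0

/-- Entropy `H(X)` of a random variable `X`. -/
def H {Ω α : Type*} [Fintype Ω] [Fintype α] [DecidableEq α] (p : Ω → ℝ)
    (X : Ω → α) : ℝ := ent (law p X)

/-- Conditional entropy `H(X|Y)`. -/
def Hc {Ω α β : Type*} [Fintype Ω] [Fintype α] [Fintype β] [DecidableEq α]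
    [DecidableEq β] (p : Ω → ℝ) (X : Ω → α) (Y : Ω → β) : ℝ :=
  H p (fun ω => (X ω, Y ω)) - H p Y

/-- Mutual information `I(X;Y)`. -/
def MI {Ω α β : Type*} [Fintype Ω] [Fintype α] [Fintype β] [DecidableEq α]
    [DecidableEq β] (p : Ω → ℝ) (X : Ω → α) (Y : Ω → β) : ℝ :=
  H p X + H p Y - H p (fun ω => (X ω, Y ω))

/-- Conditional mutual information `I(X;Y|Z)`. -/
def cMI {Ω α β γ : Type*} [Fintype Ω] [Fintype α] [Fintype β] [Fintype γ]
    [DecidableEq α] [DecidableEq β] [DecidableEq γ] (p : Ω → ℝ) (X : Ω → α)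
    (Y : Ω → β) (Z : Ω → γ) : ℝ :=
  Hc p X Z - Hc p X (fun ω => (Y ω, Z ω))

/-- Kullback–Leibler divergence (base 2). -/
def KL {α : Type*} [Fintype α] (p q : α → ℝ) : ℝ :=
  ∑ a, p a * Real.logb 2 (p a / q a)

/-- Binary entropy function. -/
def hb (x : ℝ) : ℝ := -(x * Real.logb 2 x) - (1 - x) * Real.logb 2 (1 - x)

/-- A (message-indexed) encoder is causal: its `j`-th output symbol depends only on the
first `j` state symbols. -/
def Causal {M A B : Type*} {n : ℕ} (e : M → (Fin n → A) → Fin n → B) : Prop :=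
  ∀ m s s' j, (∀ i, i ≤ j → s i = s' i) → e m s j = e m s' j

/-- A strictly causal encoder: its `j`-th output symbol depends only on the state symbols
strictly before `j`. -/
def StrictlyCausal {M A B : Type*} {n : ℕ} (e : M → (Fin n → A) → Fin n → B) : Prop :=
  ∀ m s s' j, (∀ i, i < j → s i = s' i) → e m s j = e m s' j

/-- Sample space carrying the auxiliary random variables `(V,U,U1,U2,X1,X2,S,Y,Z)`. -/
abbrev O9 (V U U1 U2 A1 A2 AS AY AZ : Type) : Type :=
  V × U × U1 × U2 × A1 × A2 × AS × AY × AZ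

namespace O9
variable {V U U1 U2 A1 A2 AS AY AZ : Type}
def v (ω : O9 V U U1 U2 A1 A2 AS AY AZ) : V := ω.1
def u (ω : O9 V U U1 U2 A1 A2 AS AY AZ) : U := ω.2.1
def u1 (ω : O9 V U U1 U2 A1 A2 AS AY AZ) : U1 := ω.2.2.1
def u2 (ω : O9 V U U1 U2 A1 A2 AS AY AZ) : U2 := ω.2.2.2.1
def x1 (ω : O9 V U U1 U2 A1 A2 AS AY AZ) : A1 := ω.2.2.2.2.1
def x2 (ω : O9 V U U1 U2 A1 A2 AS AY AZ) : A2 := ω.2.2.2.2.2.1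
def s (ω : O9 V U U1 U2 A1 A2 AS AY AZ) : AS := ω.2.2.2.2.2.2.1
def y (ω : O9 V U U1 U2 A1 A2 AS AY AZ) : AY := ω.2.2.2.2.2.2.2.1
def z (ω : O9 V U U1 U2 A1 A2 AS AY AZ) : AZ := ω.2.2.2.2.2.2.2.2
end O9

/-- Sample space carrying the auxiliary random variables `(U,U1,U2,X1,X2,S,Y,Z)`. -/
abbrev O8 (U U1 U2 A1 A2 AS AY AZ : Type) : Type :=
  U × U1 × U2 × A1 × A2 × AS × AY × AZ

namespace O8
variable {U U1 U2 A1 A2 AS AY AZ : Type}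
def u (ω : O8 U U1 U2 A1 A2 AS AY AZ) : U := ω.1
def u1 (ω : O8 U U1 U2 A1 A2 AS AY AZ) : U1 := ω.2.1
def u2 (ω : O8 U U1 U2 A1 A2 AS AY AZ) : U2 := ω.2.2.1
def x1 (ω : O8 U U1 U2 A1 A2 AS AY AZ) : A1 := ω.2.2.2.1
def x2 (ω : O8 U U1 U2 A1 A2 AS AY AZ) : A2 := ω.2.2.2.2.1
def s (ω : O8 U U1 U2 A1 A2 AS AY AZ) : AS := ω.2.2.2.2.2.1
def y (ω : O8 U U1 U2 A1 A2 AS AY AZ) : AY := ω.2.2.2.2.2.2.1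
def z (ω : O8 U U1 U2 A1 A2 AS AY AZ) : AZ := ω.2.2.2.2.2.2.2
end O8

/-- An auxiliary joint law `P_S P_{V|S} P_U P_{U1|U} P_{U2|U} P_{X1|UU1S} P_{X2|UU2S}`
over arbitrary finite auxiliary alphabets. -/
structure AuxLawR1 (A1 A2 AS AY AZ : Type) [Fintype A1] [Fintype A2] [Fintype AS]
    [Fintype AY] [Fintype AZ] where
  V : Type
  U : Type
  U1 : Type
  U2 : Type
  [fV : Fintype V]
  [fU : Fintype U]
  [fU1 : Fintype U1]
  [fU2 : Fintype U2]
  [dV : DecidableEq V]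
  [dU : DecidableEq U]
  [dU1 : DecidableEq U1]
  [dU2 : DecidableEq U2]
  PV : AS → V → ℝ
  PU : U → ℝ
  PU1 : U → U1 → ℝ
  PU2 : U → U2 → ℝ
  PX1 : U → U1 → AS → A1 → ℝ
  PX2 : U → U2 → AS → A2 → ℝ
  hPV : IsKernel PV
  hPU : IsPmf PU
  hPU1 : IsKernel PU1
  hPU2 : IsKernel PU2
  hPX1 : ∀ u u1 s, IsPmf (PX1 u u1 s)
  hPX2 : ∀ u u2 s, IsPmf (PX2 u u2 s)

attribute [instance] AuxLawR1.fV AuxLawR1.fU AuxLawR1.fU1 AuxLawR1.fU2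
  AuxLawR1.dV AuxLawR1.dU AuxLawR1.dU1 AuxLawR1.dU2

/-- An auxiliary joint law `P_S P_U P_{U1|U} P_{U2|U} P_{X1|UU1S} P_{X2|UU2S}` (no lossy
description variable `V`). -/
structure AuxLawD2 (A1 A2 AS AY AZ : Type) [Fintype A1] [Fintype A2] [Fintype AS]
    [Fintype AY] [Fintype AZ] where
  U : Type
  U1 : Type
  U2 : Type
  [fU : Fintype U]
  [fU1 : Fintype U1]
  [fU2 : Fintype U2]
  [dU : DecidableEq U]
  [dU1 : DecidableEq U1]
  [dU2 : DecidableEq U2]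
  PU : U → ℝ
  PU1 : U → U1 → ℝ
  PU2 : U → U2 → ℝ
  PX1 : U → U1 → AS → A1 → ℝ
  PX2 : U → U2 → AS → A2 → ℝ
  hPU : IsPmf PU
  hPU1 : IsKernel PU1
  hPU2 : IsKernel PU2
  hPX1 : ∀ u u1 s, IsPmf (PX1 u u1 s)
  hPX2 : ∀ u u2 s, IsPmf (PX2 u u2 s)

attribute [instance] AuxLawD2.fU AuxLawD2.fU1 AuxLawD2.fU2
  AuxLawD2.dU AuxLawD2.dU1 AuxLawD2.dU2

/-- An auxiliary joint law `P_S P_{V|S} P_{UU1U2} P_{X1|UU1S} P_{X2|UU2S}` in which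
`(V,S)` is independent of `(U,U1,U2)` (the latter with an arbitrary joint pmf). -/
structure AuxLawD3 (A1 A2 AS AY AZ : Type) [Fintype A1] [Fintype A2] [Fintype AS]
    [Fintype AY] [Fintype AZ] where
  V : Type
  U : Type
  U1 : Type
  U2 : Type
  [fV : Fintype V]
  [fU : Fintype U]
  [fU1 : Fintype U1]
  [fU2 : Fintype U2]
  [dV : DecidableEq V]
  [dU : DecidableEq U]
  [dU1 : DecidableEq U1]
  [dU2 : DecidableEq U2]
  PV : AS → V → ℝ
  PUUU : U × U1 × U2 → ℝ
  PX1 : U → U1 → AS → A1 → ℝ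
  PX2 : U → U2 → AS → A2 → ℝ
  hPV : IsKernel PV
  hPUUU : IsPmf PUUU
  hPX1 : ∀ u u1 s, IsPmf (PX1 u u1 s)
  hPX2 : ∀ u u2 s, IsPmf (PX2 u u2 s)

attribute [instance] AuxLawD3.fV AuxLawD3.fU AuxLawD3.fU1 AuxLawD3.fU2
  AuxLawD3.dV AuxLawD3.dU AuxLawD3.dU1 AuxLawD3.dU2

variable {A1 A2 AS AY AZ : Type} [Fintype A1] [Fintype A2] [Fintype AS]
  [Fintype AY] [Fintype AZ] [DecidableEq A1] [DecidableEq A2] [DecidableEq AS]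
  [DecidableEq AY] [DecidableEq AZ]

section AuxD
variable {V U U1 U2 : Type} [Fintype V] [Fintype U] [Fintype U1] [Fintype U2]
  [DecidableEq V] [DecidableEq U] [DecidableEq U1] [DecidableEq U2]

/-- The joint pmf `P_S P_{V|S} P_U P_{U1|U} P_{U2|U} P_{X1|UU1S} P_{X2|UU2S} W`. -/
def jointR1 (PS : AS → ℝ) (W : A1 → A2 → AS → AY × AZ → ℝ) (PV : AS → V → ℝ)
    (PU : U → ℝ) (PU1 : U → U1 → ℝ) (PU2 : U → U2 → ℝ)
    (PX1 : U → U1 → AS → A1 → ℝ) (PX2 : U → U2 → AS → A2 → ℝ) :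
    O9 V U U1 U2 A1 A2 AS AY AZ → ℝ :=
  fun ω => PS ω.s * PV ω.s ω.v * PU ω.u * PU1 ω.u ω.u1 * PU2 ω.u ω.u2 *
    PX1 ω.u ω.u1 ω.s ω.x1 * PX2 ω.u ω.u2 ω.s ω.x2 * W ω.x1 ω.x2 ω.s (ω.y, ω.z)

/-- The joint pmf `P_S P_U P_{U1|U} P_{U2|U} P_{X1|UU1S} P_{X2|UU2S} W`. -/
def jointD2 (PS : AS → ℝ) (W : A1 → A2 → AS → AY × AZ → ℝ) (PU : U → ℝ)
    (PU1 : U → U1 → ℝ) (PU2 : U → U2 → ℝ) (PX1 : U → U1 → AS → A1 → ℝ)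
    (PX2 : U → U2 → AS → A2 → ℝ) : O8 U U1 U2 A1 A2 AS AY AZ → ℝ :=
  fun ω => PS ω.s * PU ω.u * PU1 ω.u ω.u1 * PU2 ω.u ω.u2 *
    PX1 ω.u ω.u1 ω.s ω.x1 * PX2 ω.u ω.u2 ω.s ω.x2 * W ω.x1 ω.x2 ω.s (ω.y, ω.z)

/-- The joint pmf `P_S P_{V|S} P_{UU1U2} P_{X1|UU1S} P_{X2|UU2S} W`. -/
def jointD3 (PS : AS → ℝ) (W : A1 → A2 → AS → AY × AZ → ℝ) (PV : AS → V → ℝ)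
    (PUUU : U × U1 × U2 → ℝ) (PX1 : U → U1 → AS → A1 → ℝ)
    (PX2 : U → U2 → AS → A2 → ℝ) : O9 V U U1 U2 A1 A2 AS AY AZ → ℝ :=
  fun ω => PS ω.s * PV ω.s ω.v * PUUU (ω.u, ω.u1, ω.u2) *
    PX1 ω.u ω.u1 ω.s ω.x1 * PX2 ω.u ω.u2 ω.s ω.x2 * W ω.x1 ω.x2 ω.s (ω.y, ω.z)

/-- The secret-key rate `R_SK = I(V;Y) - I(V;Z,U,U2)`. -/
def RSKD (p : O9 V U U1 U2 A1 A2 AS AY AZ → ℝ) : ℝ :=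
  MI p (fun ω => ω.v) (fun ω => ω.y) - MI p (fun ω => ω.v) (fun ω => (ω.z, ω.u, ω.u2))

/-- The region `R^{CSI-E}_{D,11}` for one auxiliary law. -/
def regionD11 (p : O9 V U U1 U2 A1 A2 AS AY AZ → ℝ) : Set (ℝ × ℝ) :=
  {R | 0 ≤ R.1 ∧ 0 ≤ R.2 ∧
    R.2 ≤ min (cMI p (fun ω => ω.u1) (fun ω => ω.y) (fun ω => (ω.u, ω.u2, ω.v)) -
        cMI p (fun ω => ω.u1) (fun ω => ω.z) (fun ω => (ω.u2, ω.u, ω.s)) + RSKD p)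
      (cMI p (fun ω => ω.u1) (fun ω => ω.y) (fun ω => (ω.u, ω.u2, ω.v))) ∧
    R.1 + R.2 ≤ min (MI p (fun ω => (ω.v, ω.u, ω.u1, ω.u2)) (fun ω => ω.y) -
        MI p (fun ω => ω.v) (fun ω => ω.s) -
        cMI p (fun ω => ω.u1) (fun ω => ω.z) (fun ω => (ω.u2, ω.u, ω.s)) + RSKD p)
      (MI p (fun ω => (ω.v, ω.u, ω.u1, ω.u2)) (fun ω => ω.y) -
        MI p (fun ω => ω.v) (fun ω => ω.s))}

/-- The region `R^{CSI-E}_{D,12}` for one auxiliary law. -/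
def regionD12 (p : O9 V U U1 U2 A1 A2 AS AY AZ → ℝ) : Set (ℝ × ℝ) :=
  {R | 0 ≤ R.1 ∧ 0 ≤ R.2 ∧
    R.2 ≤ min (RSKD p)
      (cMI p (fun ω => ω.u1) (fun ω => ω.y) (fun ω => (ω.u, ω.u2, ω.v))) ∧
    R.1 + R.2 ≤ MI p (fun ω => (ω.v, ω.u, ω.u1, ω.u2)) (fun ω => ω.y) -
      MI p (fun ω => ω.v) (fun ω => ω.s)}

/-- The region `R^{CSI-E}_{D,21}` for one auxiliary law. -/
def regionD21 (p : O8 U U1 U2 A1 A2 AS AY AZ → ℝ) : Set (ℝ × ℝ) :=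
  {R | 0 ≤ R.1 ∧ 0 ≤ R.2 ∧
    R.2 ≤ min (cMI p (fun ω => ω.u1) (fun ω => ω.y) (fun ω => (ω.u, ω.u2)) -
        cMI p (fun ω => ω.u1) (fun ω => ω.z) (fun ω => (ω.u2, ω.u, ω.s)) -
        Hc p (fun ω => ω.s) (fun ω => (ω.u, ω.u1, ω.u2, ω.y)) +
        Hc p (fun ω => ω.s) (fun ω => (ω.z, ω.u, ω.u2)))
      (cMI p (fun ω => ω.u1) (fun ω => ω.y) (fun ω => (ω.u, ω.u2)) -
        Hc p (fun ω => ω.s) (fun ω => (ω.u, ω.u1, ω.u2, ω.y))) ∧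
    R.1 + R.2 ≤ min (MI p (fun ω => (ω.u, ω.u1, ω.u2)) (fun ω => ω.y) -
        cMI p (fun ω => ω.u1) (fun ω => ω.z) (fun ω => (ω.u2, ω.u, ω.s)) -
        Hc p (fun ω => ω.s) (fun ω => (ω.u, ω.u1, ω.u2, ω.y)) +
        Hc p (fun ω => ω.s) (fun ω => (ω.z, ω.u, ω.u2)))
      (MI p (fun ω => (ω.u, ω.u1, ω.u2)) (fun ω => ω.y) -
        Hc p (fun ω => ω.s) (fun ω => (ω.u, ω.u1, ω.u2, ω.y)))}

/-- The region `R^{CSI-E}_{D,22}` for one auxiliary law. -/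
def regionD22 (p : O8 U U1 U2 A1 A2 AS AY AZ → ℝ) : Set (ℝ × ℝ) :=
  {R | 0 ≤ R.1 ∧ 0 ≤ R.2 ∧
    R.2 ≤ min (Hc p (fun ω => ω.s) (fun ω => (ω.z, ω.u, ω.u2)) -
        Hc p (fun ω => ω.s) (fun ω => (ω.u, ω.u1, ω.u2, ω.y)))
      (cMI p (fun ω => ω.u1) (fun ω => ω.y) (fun ω => (ω.u, ω.u2)) -
        Hc p (fun ω => ω.s) (fun ω => (ω.u, ω.u1, ω.u2, ω.y))) ∧
    R.1 + R.2 ≤ MI p (fun ω => (ω.u, ω.u1, ω.u2)) (fun ω => ω.y) -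
      Hc p (fun ω => ω.s) (fun ω => (ω.u, ω.u1, ω.u2, ω.y))}

/-- The wiretap-coding region `R^{CSI-E}_{D,3}` for one auxiliary law. -/
def regionD3 (p : O9 V U U1 U2 A1 A2 AS AY AZ → ℝ) : Set (ℝ × ℝ) :=
  {R | 0 ≤ R.1 ∧ 0 ≤ R.2 ∧
    R.2 ≤ cMI p (fun ω => ω.u1) (fun ω => ω.y) (fun ω => (ω.u, ω.u2, ω.v)) -
      cMI p (fun ω => ω.u1) (fun ω => ω.z) (fun ω => (ω.u2, ω.u)) ∧
    R.1 + R.2 ≤ MI p (fun ω => (ω.v, ω.u, ω.u1, ω.u2)) (fun ω => ω.y) -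
      MI p (fun ω => ω.v) (fun ω => ω.s) -
      cMI p (fun ω => ω.u1) (fun ω => ω.z) (fun ω => (ω.u2, ω.u))}

end AuxD

/-- The joint law determined by an `AuxLawR1` datum. -/
def AuxLawR1.joint (L : AuxLawR1 A1 A2 AS AY AZ) (PS : AS → ℝ)
    (W : A1 → A2 → AS → AY × AZ → ℝ) : O9 L.V L.U L.U1 L.U2 A1 A2 AS AY AZ → ℝ :=
  jointR1 PS W L.PV L.PU L.PU1 L.PU2 L.PX1 L.PX2

/-- The joint law determined by an `AuxLawD2` datum. -/
def AuxLawD2.joint (L : AuxLawD2 A1 A2 AS AY AZ) (PS : AS → ℝ)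
    (W : A1 → A2 → AS → AY × AZ → ℝ) : O8 L.U L.U1 L.U2 A1 A2 AS AY AZ → ℝ :=
  jointD2 PS W L.PU L.PU1 L.PU2 L.PX1 L.PX2

/-- The joint law determined by an `AuxLawD3` datum. -/
def AuxLawD3.joint (L : AuxLawD3 A1 A2 AS AY AZ) (PS : AS → ℝ)
    (W : A1 → A2 → AS → AY × AZ → ℝ) : O9 L.V L.U L.U1 L.U2 A1 A2 AS AY AZ → ℝ :=
  jointD3 PS W L.PV L.PUUU L.PX1 L.PX2

/-- The region `R^{CSI-E}_{D,11}` (union over auxiliary laws). -/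
def RegionD11 (PS : AS → ℝ) (W : A1 → A2 → AS → AY × AZ → ℝ) : Set (ℝ × ℝ) :=
  {R | ∃ L : AuxLawR1 A1 A2 AS AY AZ, R ∈ regionD11 (L.joint PS W)}

/-- The region `R^{CSI-E}_{D,12}` (union over auxiliary laws). -/
def RegionD12 (PS : AS → ℝ) (W : A1 → A2 → AS → AY × AZ → ℝ) : Set (ℝ × ℝ) :=
  {R | ∃ L : AuxLawR1 A1 A2 AS AY AZ, R ∈ regionD12 (L.joint PS W)}

/-- The region `R^{CSI-E}_{D,21}` (union over auxiliary laws). -/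
def RegionD21 (PS : AS → ℝ) (W : A1 → A2 → AS → AY × AZ → ℝ) : Set (ℝ × ℝ) :=
  {R | ∃ L : AuxLawD2 A1 A2 AS AY AZ, R ∈ regionD21 (L.joint PS W)}

/-- The region `R^{CSI-E}_{D,22}` (union over auxiliary laws). -/
def RegionD22 (PS : AS → ℝ) (W : A1 → A2 → AS → AY × AZ → ℝ) : Set (ℝ × ℝ) :=
  {R | ∃ L : AuxLawD2 A1 A2 AS AY AZ, R ∈ regionD22 (L.joint PS W)}

/-- The region `R^{CSI-E}_{D,3}` (union over auxiliary laws). -/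
def RegionD3 (PS : AS → ℝ) (W : A1 → A2 → AS → AY × AZ → ℝ) : Set (ℝ × ℝ) :=
  {R | ∃ L : AuxLawD3 A1 A2 AS AY AZ, R ∈ regionD3 (L.joint PS W)}

/-- The `Pr{S=1} = 0.8` state pmf on `Bool`. -/
def PS08 : Bool → ℝ := fun s => if s then 0.8 else 0.2

/-- The deterministic channel of Example 2: `Y = X1` if `S = 0`, `Y = X2` if `S = 1`, and
`Z = X1`. -/
def Wex3 : Bool → Bool → Bool → Bool × Bool → ℝ :=
  fun x1 x2 s yz => if yz.1 = cond s x2 x1 ∧ yz.2 = x1 then 1 else 0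

/-! ### Mass functions -/

/-- The mass function of a pair whose first component has mass function `q` and whose second
component has conditional mass function `k`. -/
def compProd {α β : Type*} (q : α → ℝ) (k : α → β → ℝ) : α × β → ℝ := fun x => q x.1 * k x.1 x.2

section MassFunctions

variable {α β : Type*} [Fintype α]

/-- The mixture of the mass functions `k a` with weights `q a`, that is, the second marginal of
`compProd q k`. -/
def mix (q : α → ℝ) (k : α → β → ℝ) : β → ℝ := fun b => ∑ a, q a * k a b

lemma sum_mix [Fintype β] {q : α → ℝ} {k : α → β → ℝ} (hq : ∑ a, q a = 1)
    (hk : ∀ a, ∑ b, k a b = 1) : ∑ b, mix q k b = 1 := by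
  simp only [mix]
  rw [Finset.sum_comm]
  simp only [← Finset.mul_sum, hk, mul_one, hq]

lemma mix_const {q : α → ℝ} (hq : ∑ a, q a = 1) (r : β → ℝ) : mix q (fun _ => r) = r := by
  ext b
  rw [mix, ← Finset.sum_mul, hq, one_mul]

lemma mix_comm {γ : Type*} [Fintype β] (q : α → ℝ) (r : β → ℝ) (k : α → β → γ → ℝ) :
    mix q (fun a => mix r (k a)) = mix r fun b => mix q fun a => k a b := by
  ext c
  simp only [mix, Finset.mul_sum]
  rw [Finset.sum_comm]
  exact Finset.sum_congr rfl fun b _ => Finset.sum_congr rfl fun a _ => mul_left_comm _ _ _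

lemma IsPmf.mix [Fintype β] {q : α → ℝ} {k : α → β → ℝ} (hq : IsPmf q) (hk : IsKernel k) :
    IsPmf (mix q k) :=
  ⟨fun b => Finset.sum_nonneg fun a _ => mul_nonneg (hq.1 a) ((hk a).1 b),
    sum_mix hq.2 fun a => (hk a).2⟩

lemma IsPmf.compProd [Fintype β] {q : α → ℝ} {k : α → β → ℝ} (hq : IsPmf q) (hk : IsKernel k) :
    IsPmf (compProd q k) :=
  ⟨fun x => mul_nonneg (hq.1 x.1) ((hk x.1).1 x.2), by
    simp only [Paper.compProd, Fintype.sum_prod_type, ← Finset.mul_sum, (hk _).2, mul_one, hq.2]⟩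

lemma IsPmf.le_one {q : α → ℝ} (hq : IsPmf q) (a : α) : q a ≤ 1 :=
  hq.2 ▸ Finset.single_le_sum (fun b _ => hq.1 b) (Finset.mem_univ a)

lemma isPmf_single [DecidableEq α] (a : α) : IsPmf (Pi.single a (1 : ℝ)) :=
  ⟨fun b => by by_cases h : b = a <;> simp [h], by simp [Pi.single_apply]⟩

lemma exists_eq_compProd {α : Type*} [Fintype β] [Nonempty β] {m : α × β → ℝ}
    (hm : ∀ x, 0 ≤ m x) :
    ∃ (q : α → ℝ) (k : α → β → ℝ), (∀ a, 0 ≤ q a) ∧ IsKernel k ∧ m = compProd q k := by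
  classical
  let q : α → ℝ := fun a => ∑ b, m (a, b)
  let k : α → β → ℝ := fun a =>
    if q a = 0 then Pi.single (Classical.arbitrary β) 1 else fun b => m (a, b) / q a
  have hq : ∀ a, 0 ≤ q a := fun a => Finset.sum_nonneg fun b _ => hm (a, b)
  refine ⟨q, k, hq, fun a => ?_, ?_⟩
  · by_cases h : q a = 0
    · simpa only [k, if_pos h] using isPmf_single _
    · simp only [k, if_neg h]
      exact ⟨fun b => div_nonneg (hm _) (hq a), by rw [← Finset.sum_div]; exact div_self h⟩
  · ext ⟨a, b⟩
    by_cases h : q a = 0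
    · have hab := (Finset.sum_eq_zero_iff_of_nonneg fun b _ => hm (a, b)).1 h b (Finset.mem_univ b)
      simp [compProd, h, hab]
    · simp [compProd, k, h, mul_div_cancel₀]

end MassFunctions

/-! ### Entropy of mass functions -/

section MassFunctionEntropy

variable {α β : Type*} [Fintype α] [Fintype β]

lemma ent_eq_sum_negMulLog (q : α → ℝ) :
    ent q = (∑ a, Real.negMulLog (q a)) / Real.log 2 := by
  simp only [ent, Real.negMulLog, Real.logb, Finset.sum_div, ← Finset.sum_neg_distrib]
  exact Finset.sum_congr rfl fun a _ => by ring

lemma ent_nonneg {q : α → ℝ} (hq : IsPmf q) : 0 ≤ ent q := by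
  rw [ent_eq_sum_negMulLog]
  exact div_nonneg (Finset.sum_nonneg fun a _ => Real.negMulLog_nonneg (hq.1 a) (hq.le_one a))
    (Real.log_nonneg one_le_two)

lemma ent_compProd (q : α → ℝ) {k : α → β → ℝ} (hk : ∀ a, ∑ b, k a b = 1) :
    ent (compProd q k) = ent q + ∑ a, q a * ent (k a) := by
  simp only [ent_eq_sum_negMulLog, compProd, Fintype.sum_prod_type, Real.negMulLog_mul,
    Finset.sum_add_distrib, ← Finset.sum_mul, ← Finset.mul_sum, hk, one_mul, mul_div_assoc',
    ← Finset.sum_div, add_div]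

lemma sum_mul_ent_le_ent_mix {q : α → ℝ} {k : α → β → ℝ} (hq : IsPmf q)
    (hk : ∀ a b, 0 ≤ k a b) : ∑ a, q a * ent (k a) ≤ ent (mix q k) := by
  simp only [ent_eq_sum_negMulLog, mul_div_assoc', ← Finset.sum_div, Finset.mul_sum]
  rw [Finset.sum_comm]
  gcongr with b
  simpa only [smul_eq_mul, mix] using Real.concaveOn_negMulLog.le_map_sum
    (fun a _ => hq.1 a) hq.2 fun a _ => hk a b

end MassFunctionEntropy

/-! ### Laws and entropies of random variables -/

section RandomVariables

variable {Ω α β γ : Type*} [Fintype Ω] {p : Ω → ℝ}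

lemma law_nonneg [DecidableEq α] (hp : ∀ ω, 0 ≤ p ω) (X : Ω → α) (a : α) : 0 ≤ law p X a :=
  Finset.sum_nonneg fun ω _ => by split_ifs <;> simp [hp]

lemma law_id [DecidableEq Ω] (p : Ω → ℝ) : law p (fun ω => ω) = p := by
  ext ω
  simp [law]

lemma law_apply_congr [DecidableEq α] [DecidableEq β] {X : Ω → α} {Y : Ω → β} {a : α} {b : β}
    (h : ∀ ω, X ω = a ↔ Y ω = b) : law p X a = law p Y b := by
  simp only [law, h]

lemma sum_law_mul [Fintype α] [DecidableEq α] (p : Ω → ℝ) (X : Ω → α) (f : α → ℝ) :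
    ∑ a, law p X a * f a = ∑ ω, p ω * f (X ω) := by
  simp only [law, Finset.sum_mul, ite_mul, zero_mul]
  rw [Finset.sum_comm]
  simp

lemma sum_law [Fintype α] [DecidableEq α] (p : Ω → ℝ) (X : Ω → α) :
    ∑ a, law p X a = ∑ ω, p ω := by
  simpa using sum_law_mul p X 1

lemma law_eq_sum_law_prod [Fintype β] [DecidableEq α] [DecidableEq β] (p : Ω → ℝ) (A : Ω → α)
    (B : Ω → β) (a : α) : law p A a = ∑ b, law p (fun ω => (A ω, B ω)) (a, b) := by
  simp only [law, Prod.mk.injEq, ite_and]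
  rw [Finset.sum_comm]
  refine Finset.sum_congr rfl fun ω _ => ?_
  split_ifs <;> simp

lemma law_law [Fintype α] [DecidableEq α] [DecidableEq β] (p : Ω → ℝ) (X : Ω → α) (f : α → β) :
    law (law p X) f = law p fun ω => f (X ω) := by
  ext b
  simpa only [law, mul_ite, mul_one, mul_zero] using
    sum_law_mul p X fun a => if f a = b then 1 else 0

lemma mix_single [DecidableEq α] (p : Ω → ℝ) (X : Ω → α) :
    mix p (fun ω => Pi.single (X ω) 1) = law p X := by
  ext a
  simp only [mix, law, Pi.single_apply, mul_ite, mul_one, mul_zero, eq_comm]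

lemma H_eq_neg_sum [Fintype α] [DecidableEq α] (p : Ω → ℝ) (X : Ω → α) :
    H p X = -∑ ω, p ω * Real.logb 2 (law p X (X ω)) := by
  rw [H, ent, sum_law_mul p X fun a => Real.logb 2 (law p X a)]

lemma H_congr [Fintype α] [DecidableEq α] [Fintype β] [DecidableEq β] {X : Ω → α} {Y : Ω → β}
    (h : ∀ ω ω', X ω = X ω' ↔ Y ω = Y ω') : H p X = H p Y := by
  simp only [H_eq_neg_sum]
  congr 1
  exact Finset.sum_congr rfl fun ω _ => by rw [law_apply_congr fun ω' => h ω' ω]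

lemma H_const [Fintype α] [DecidableEq α] (hp : ∑ ω, p ω = 1) (a : α) :
    H p (fun _ => a) = 0 := by
  simp [H_eq_neg_sum, law, hp]

lemma law_fst_of_law_eq_compProd [Fintype β] [DecidableEq α] [DecidableEq β] {A : Ω → α}
    {B : Ω → β} {q : α → ℝ} {k : α → β → ℝ} (h : law p (fun ω => (A ω, B ω)) = compProd q k)
    (hk : ∀ a, ∑ b, k a b = 1) : law p A = q := by
  ext a
  simp only [law_eq_sum_law_prod p A B, h, compProd, ← Finset.mul_sum, hk, mul_one]

lemma law_snd_of_law_eq_compProd [Fintype α] [DecidableEq α] [DecidableEq β] {A : Ω → α}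
    {B : Ω → β} {q : α → ℝ} {k : α → β → ℝ} (h : law p (fun ω => (A ω, B ω)) = compProd q k) :
    law p B = mix q k := by
  ext b
  rw [law_eq_sum_law_prod p B A]
  refine Finset.sum_congr rfl fun a _ => ?_
  exact (law_apply_congr fun ω => by simp only [Prod.mk.injEq, and_comm]).trans
    (congrFun h (a, b))

lemma law_outer_of_law_eq_compProd [Fintype α] [DecidableEq α] [DecidableEq β] [DecidableEq γ]
    {A : Ω → α} {B : Ω → β} {C : Ω → γ} {q : γ → ℝ} {r : γ → α → ℝ} {k : γ × α → β → ℝ}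
    (h : law p (fun ω => ((C ω, A ω), B ω)) = compProd (compProd q r) k) :
    law p (fun ω => (C ω, B ω)) = compProd q fun c => mix (r c) fun a => k (c, a) := by
  ext ⟨c, b⟩
  simp only [law_eq_sum_law_prod p (fun ω => (C ω, B ω)) A, compProd, mix, Finset.mul_sum,
    ← mul_assoc]
  refine Finset.sum_congr rfl fun a _ => ?_
  exact (law_apply_congr fun ω => by simp only [Prod.mk.injEq, and_right_comm]).trans
    (congrFun h ((c, a), b))

lemma law_prod_map_of_law_eq_compProd [Fintype β] [DecidableEq α] [DecidableEq β] [DecidableEq γ]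
    {A : Ω → α} {B : Ω → β} {q : α → ℝ} {k : α → β → ℝ}
    (h : law p (fun ω => (A ω, B ω)) = compProd q k) (f : α → β → γ) :
    law p (fun ω => (A ω, f (A ω) (B ω))) = compProd q fun a => law (k a) (f a) := by
  ext ⟨a, c⟩
  rw [law_eq_sum_law_prod p _ B, compProd, law, Finset.mul_sum]
  refine Finset.sum_congr rfl fun b _ => ?_
  split_ifs with hc
  · refine (law_apply_congr fun ω => ?_).trans (congrFun h (a, b))
    grind
  · rw [mul_zero, law]
    exact Finset.sum_eq_zero fun ω _ => if_neg (by grind)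

lemma law_cond_compProd_const [Fintype α] [DecidableEq α] {q r : α → ℝ} (hq : ∑ a, q a = 1)
    (hr : ∑ a, r a = 1) (s : Bool) :
    law (compProd q fun _ => r) (fun x => cond s x.2 x.1) = cond s r q := by
  cases s
  · exact law_fst_of_law_eq_compProd (law_id _) fun _ => hr
  · exact (law_snd_of_law_eq_compProd (law_id _)).trans (mix_const hq r)

variable [Fintype α] [Fintype β] [Fintype γ] [DecidableEq α] [DecidableEq β] [DecidableEq γ]

lemma Hc_congr {A : Ω → α} {B : Ω → β} {C : Ω → γ} (h : ∀ ω ω', B ω = B ω' ↔ C ω = C ω') :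
    Hc p A B = Hc p A C := by
  rw [Hc, Hc, H_congr h, H_congr (X := fun ω => (A ω, B ω)) (Y := fun ω => (A ω, C ω))]
  simp only [Prod.mk.injEq, h, implies_true]

lemma MI_congr {δ : Type*} [Fintype δ] [DecidableEq δ] {A : Ω → α} {A' : Ω → β} {B : Ω → γ}
    {B' : Ω → δ} (hA : ∀ ω ω', A ω = A ω' ↔ A' ω = A' ω')
    (hB : ∀ ω ω', B ω = B ω' ↔ B' ω = B' ω') : MI p A B = MI p A' B' := by
  rw [MI, MI, H_congr hA, H_congr hB,
    H_congr (X := fun ω => (A ω, B ω)) (Y := fun ω => (A' ω, B' ω))]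
  simp only [Prod.mk.injEq, hA, hB, implies_true]

lemma Hc_eq_H_sub_H (p : Ω → ℝ) (A : Ω → α) (B : Ω → β) :
    Hc p B A = H p (fun ω => (A ω, B ω)) - H p A := by
  rw [Hc, H_congr (X := fun ω => (B ω, A ω)) (Y := fun ω => (A ω, B ω))]
  simp only [Prod.mk.injEq, and_comm, implies_true]

lemma MI_eq_H_sub_Hc (p : Ω → ℝ) (A : Ω → α) (B : Ω → β) : MI p A B = H p B - Hc p B A := by
  rw [MI, Hc_eq_H_sub_H]
  ring

lemma cMI_eq_Hc_sub_Hc (p : Ω → ℝ) (A : Ω → α) (B : Ω → β) (C : Ω → γ) :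
    cMI p A B C = Hc p B C - Hc p B (fun ω => (C ω, A ω)) := by
  rw [cMI, Hc_eq_H_sub_H p C A, Hc, Hc, Hc,
    H_congr (X := fun ω => (A ω, B ω, C ω)) (Y := fun ω => (B ω, C ω, A ω))]
  · ring
  · simp only [Prod.mk.injEq]; tauto

lemma MI_const (hp : ∑ ω, p ω = 1) (a : α) (B : Ω → β) : MI p (fun _ => a) B = 0 := by
  rw [MI, H_const hp, H_congr (X := fun ω => (a, B ω)) (Y := B), zero_add, sub_self]
  simp only [Prod.mk.injEq, true_and, implies_true]

lemma Hc_eq_zero_of_comp {A : Ω → α} {B : Ω → β} (f : α → β) (h : ∀ ω, B ω = f (A ω)) :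
    Hc p B A = 0 := by
  rw [Hc, H_congr (X := fun ω => (B ω, A ω)) (Y := A), sub_self]
  simp only [Prod.mk.injEq, and_iff_right_iff_imp, h]
  exact fun ω ω' hA => congrArg f hA

lemma MI_eq_H_of_comp {A : Ω → α} {B : Ω → β} (f : α → β) (h : ∀ ω, B ω = f (A ω)) :
    MI p A B = H p B := by
  rw [MI_eq_H_sub_Hc, Hc_eq_zero_of_comp f h, sub_zero]

section Disintegration

variable {A : Ω → α} {B : Ω → β} {C : Ω → γ} {q : α → ℝ} {k : α → β → ℝ}

lemma Hc_eq_sum (h : law p (fun ω => (A ω, B ω)) = compProd q k) (hk : ∀ a, ∑ b, k a b = 1) :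
    Hc p B A = ∑ a, q a * ent (k a) := by
  rw [Hc_eq_H_sub_H, H, H, h, law_fst_of_law_eq_compProd h hk, ent_compProd q hk,
    add_sub_cancel_left]

lemma MI_eq_ent_sub_sum (h : law p (fun ω => (A ω, B ω)) = compProd q k)
    (hk : ∀ a, ∑ b, k a b = 1) : MI p A B = ent (mix q k) - ∑ a, q a * ent (k a) := by
  rw [MI_eq_H_sub_Hc, Hc_eq_sum h hk, H, law_snd_of_law_eq_compProd h]

lemma MI_eq_zero_of_law_eq_compProd_const {r : β → ℝ}
    (h : law p (fun ω => (A ω, B ω)) = compProd q fun _ => r) (hq : ∑ a, q a = 1)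
    (hr : ∑ b, r b = 1) : MI p A B = 0 := by
  rw [MI_eq_ent_sub_sum h fun _ => hr, mix_const hq, ← Finset.sum_mul, hq, one_mul, sub_self]

lemma cMI_eq_sum {q : γ → ℝ} {r : γ → α → ℝ} {k : γ × α → β → ℝ}
    (h : law p (fun ω => ((C ω, A ω), B ω)) = compProd (compProd q r) k)
    (hr : ∀ c, ∑ a, r c a = 1) (hk : ∀ x, ∑ b, k x b = 1) :
    cMI p A B C =
      ∑ c, q c * (ent (mix (r c) fun a => k (c, a)) - ∑ a, r c a * ent (k (c, a))) := by
  rw [cMI_eq_Hc_sub_Hc, Hc_eq_sum h hk, Hc_eq_sum (law_outer_of_law_eq_compProd h) fun c =>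
    sum_mix (hr c) fun a => hk (c, a)]
  simp only [compProd, mul_sub, Finset.sum_sub_distrib, Fintype.sum_prod_type, Finset.mul_sum,
    mul_assoc]

end Disintegration

lemma Hc_nonneg (hp : ∀ ω, 0 ≤ p ω) (A : Ω → α) (B : Ω → β) : 0 ≤ Hc p A B := by
  cases isEmpty_or_nonempty Ω
  · simp [Hc, H, law, ent]
  have : Nonempty α := Nonempty.map A ‹_›
  obtain ⟨q, k, hq, hk, h⟩ := exists_eq_compProd (law_nonneg hp fun ω => (B ω, A ω))
  rw [Hc_eq_sum h fun b => (hk b).2]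
  exact Finset.sum_nonneg fun b _ => mul_nonneg (hq b) (ent_nonneg (hk b))

lemma MI_nonneg (hp : IsPmf p) (A : Ω → α) (B : Ω → β) : 0 ≤ MI p A B := by
  have : Nonempty Ω := not_isEmpty_iff.1 fun _ => by simpa using hp.2
  have : Nonempty β := Nonempty.map B ‹_›
  obtain ⟨q, k, hq, hk, h⟩ := exists_eq_compProd (law_nonneg hp.1 fun ω => (A ω, B ω))
  have hq1 : ∑ a, q a = 1 := by
    rw [← law_fst_of_law_eq_compProd h fun a => (hk a).2, sum_law, hp.2]
  rw [MI_eq_ent_sub_sum h fun a => (hk a).2]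
  exact sub_nonneg.2 (sum_mul_ent_le_ent_mix ⟨hq, hq1⟩ fun a => (hk a).1)

lemma cMI_nonneg (hp : ∀ ω, 0 ≤ p ω) (A : Ω → α) (B : Ω → β) (C : Ω → γ) : 0 ≤ cMI p A B C := by
  cases isEmpty_or_nonempty Ω
  · simp [cMI, Hc, H, law, ent]
  have : Nonempty α := Nonempty.map A ‹_›
  have : Nonempty β := Nonempty.map B ‹_›
  obtain ⟨m, k, hm, hk, h⟩ := exists_eq_compProd (law_nonneg hp fun ω => ((C ω, A ω), B ω))
  obtain ⟨q, r, hq, hr, rfl⟩ := exists_eq_compProd hm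
  rw [cMI_eq_sum h (fun c => (hr c).2) fun x => (hk x).2]
  exact Finset.sum_nonneg fun c _ => mul_nonneg (hq c)
    (sub_nonneg.2 (sum_mul_ent_le_ent_mix (hr c) fun a => (hk (c, a)).1))

section Independence

variable {δ : Type*} [Fintype δ] [DecidableEq δ] {S : Ω → α} {T : Ω → β}

lemma H_prod_of_MI_eq_zero (h : MI p T S = 0) :
    H p (fun ω => (T ω, S ω)) = H p T + H p S := by
  rw [MI] at h
  linarith

lemma MI_prod_sub_H_of_MI_eq_zero (h : MI p T S = 0) (Y : Ω → γ) :
    MI p (fun ω => (S ω, T ω)) Y - H p S = MI p T Y - Hc p S (fun ω => (Y ω, T ω)) := by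
  have hST : H p (fun ω => (S ω, T ω)) = H p T + H p S := by
    rw [← H_prod_of_MI_eq_zero h]
    exact H_congr fun ω ω' => by simp only [Prod.mk.injEq, and_comm]
  have hTY : H p (fun ω => (T ω, Y ω)) = H p (fun ω => (Y ω, T ω)) :=
    H_congr fun ω ω' => by simp only [Prod.mk.injEq, and_comm]
  have hSTY : H p (fun ω => ((S ω, T ω), Y ω)) = H p (fun ω => (S ω, Y ω, T ω)) :=
    H_congr fun ω ω' => by simp only [Prod.mk.injEq]; tauto
  rw [MI, MI, Hc, hST, hTY, hSTY]
  ring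

lemma cMI_sub_Hc_of_MI_eq_zero {A : Ω → β} {C : Ω → γ}
    (h : MI p (fun ω => (C ω, A ω)) S = 0) (Y : Ω → δ) :
    cMI p A Y C - Hc p S (fun ω => ((C ω, A ω), Y ω)) =
      Hc p Y C - H p S - Hc p Y (fun ω => ((C ω, A ω), S ω)) := by
  have hY : H p (fun ω => ((C ω, A ω), Y ω)) = H p (fun ω => (Y ω, C ω, A ω)) :=
    H_congr fun ω ω' => by simp only [Prod.mk.injEq, and_comm]
  have hSY : H p (fun ω => (Y ω, (C ω, A ω), S ω)) = H p (fun ω => (S ω, (C ω, A ω), Y ω)) :=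
    H_congr fun ω ω' => by simp only [Prod.mk.injEq]; tauto
  rw [cMI_eq_Hc_sub_Hc, Hc, Hc, Hc, Hc, H_prod_of_MI_eq_zero h, hY, hSY]
  ring

end Independence

end RandomVariables

/-! ### Binary entropy -/

section BinaryEntropy

lemma negMulLog_add_le {x y : ℝ} (hx : 0 ≤ x) (hy : 0 ≤ y) :
    Real.negMulLog (x + y) ≤ Real.negMulLog x + Real.negMulLog y := by
  rcases hx.eq_or_lt with rfl | hx'
  · simp
  rcases hy.eq_or_lt with rfl | hy'
  · simp
  have h1 : x * Real.log x ≤ x * Real.log (x + y) := by gcongr; linarith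
  have h2 : y * Real.log y ≤ y * Real.log (x + y) := by gcongr; linarith
  simp only [Real.negMulLog]
  linarith

lemma binEntropy_add_one_sub_mul_le {q b : ℝ} (hq0 : 0 ≤ q) (hq1 : q ≤ 1) (hb : 0 ≤ b) :
    Real.binEntropy (q + (1 - q) * b) ≤ Real.binEntropy q + (1 - q) * Real.binEntropy b := by
  have h := negMulLog_add_le hq0 (mul_nonneg (sub_nonneg.2 hq1) hb)
  simp only [Real.binEntropy_eq_negMulLog_add_negMulLog_one_sub]
  rw [show 1 - (q + (1 - q) * b) = (1 - q) * (1 - b) by ring, Real.negMulLog_mul _ (1 - b)]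
  rw [Real.negMulLog_mul] at h
  linarith

lemma monotoneOn_binEntropy : MonotoneOn Real.binEntropy (Set.Icc 0 2⁻¹) :=
  Real.binEntropy_strictMonoOn.monotoneOn

/-- If `q + (1 - q) * b` is at most `1/2`, it is the point of the mixture closest to `1/2`.
Otherwise some `b₀ ≤ b` has `q + (1 - q) * b₀ = 1/2`, where the entropy is maximal. -/
lemma binEntropy_mix_le_of_le_half {q a b : ℝ} (hq0 : 0 ≤ q) (hq : q ≤ 1 / 2) (ha0 : 0 ≤ a)
    (ha1 : a ≤ 1) (hb0 : 0 ≤ b) (hb : b ≤ 1 / 2) :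
    Real.binEntropy (q * a + (1 - q) * b) ≤
      Real.binEntropy q + (1 - q) * Real.binEntropy b := by
  have hqa : q * a ≤ q := mul_le_of_le_one_right hq0 ha1
  have hqa0 : 0 ≤ q * a := mul_nonneg hq0 ha0
  have hqb0 : 0 ≤ (1 - q) * b := mul_nonneg (by linarith) hb0
  rcases le_total (q + (1 - q) * b) 2⁻¹ with hm | hm
  · calc Real.binEntropy (q * a + (1 - q) * b)
        ≤ Real.binEntropy (q + (1 - q) * b) :=
          monotoneOn_binEntropy ⟨by linarith, by linarith⟩ ⟨by linarith, hm⟩ (by linarith)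
      _ ≤ _ := binEntropy_add_one_sub_mul_le hq0 (by linarith) hb0
  · set b₀ : ℝ := (1 / 2 - q) / (1 - q)
    have hb₀ : (1 - q) * b₀ = 1 / 2 - q := mul_div_cancel₀ _ (by linarith)
    have hb₀0 : 0 ≤ b₀ := div_nonneg (by linarith) (by linarith)
    have hb₀b : b₀ ≤ b := le_of_mul_le_mul_left (by linarith) (by linarith : 0 < 1 - q)
    have hmono : Real.binEntropy b₀ ≤ Real.binEntropy b :=
      monotoneOn_binEntropy ⟨hb₀0, by linarith⟩ ⟨hb0, by linarith⟩ hb₀b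
    calc Real.binEntropy (q * a + (1 - q) * b)
        ≤ Real.log 2 := Real.binEntropy_le_log_two
      _ = Real.binEntropy (q + (1 - q) * b₀) := by
          rw [hb₀, add_sub_cancel, one_div, Real.binEntropy_two_inv]
      _ ≤ Real.binEntropy q + (1 - q) * Real.binEntropy b₀ :=
          binEntropy_add_one_sub_mul_le hq0 (by linarith) hb₀0
      _ ≤ _ := by gcongr; linarith

lemma binEntropy_mix_le {q a b : ℝ} (hq0 : 0 ≤ q) (hq : q ≤ 1 / 2) (ha0 : 0 ≤ a) (ha1 : a ≤ 1)
    (hb0 : 0 ≤ b) (hb1 : b ≤ 1) :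
    Real.binEntropy (q * a + (1 - q) * b) ≤
      Real.binEntropy q + (1 - q) * Real.binEntropy b := by
  rcases le_total b (1 / 2) with hb | hb
  · exact binEntropy_mix_le_of_le_half hq0 hq ha0 ha1 hb0 hb
  · have h := binEntropy_mix_le_of_le_half hq0 hq (sub_nonneg.2 ha1) (sub_le_self 1 ha0)
      (sub_nonneg.2 hb1) (by linarith)
    rwa [show q * (1 - a) + (1 - q) * (1 - b) = 1 - (q * a + (1 - q) * b) by ring,
      Real.binEntropy_one_sub, Real.binEntropy_one_sub] at h

lemma hb_eq_binEntropy_div_log (x : ℝ) : hb x = Real.binEntropy x / Real.log 2 := by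
  simp only [hb, Real.logb, Real.binEntropy_eq_negMulLog_add_negMulLog_one_sub, Real.negMulLog]
  ring

lemma hb_one_sub (x : ℝ) : hb (1 - x) = hb x := by
  rw [hb_eq_binEntropy_div_log, hb_eq_binEntropy_div_log, Real.binEntropy_one_sub]

lemma IsPmf.apply_false {q : Bool → ℝ} (hq : IsPmf q) : q false = 1 - q true := by
  have := hq.2
  rw [Fintype.sum_bool] at this
  linarith

lemma ent_bool {q : Bool → ℝ} (hq : IsPmf q) : ent q = hb (q true) := by
  rw [ent, hb, Fintype.sum_bool, hq.apply_false]
  ring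

lemma hb_apply_false {q : Bool → ℝ} (hq : IsPmf q) : hb (q false) = ent q := by
  rw [ent_bool hq, hq.apply_false, hb_one_sub]

lemma ent_mix_bool_le {q : Bool → ℝ} {k : Bool → Bool → ℝ} (hq : IsPmf q) (hk : IsKernel k)
    (h : 1 / 2 ≤ q true) : ent (mix q k) ≤ ent q + q true * ent (k true) := by
  have hq1 : 1 - q false = q true := by rw [hq.apply_false, sub_sub_cancel]
  have hle := binEntropy_mix_le (hq.1 false) (by linarith) ((hk false).1 true)
    ((hk false).le_one true) ((hk true).1 true) ((hk true).le_one true)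
  rw [ent_bool (hq.mix hk), ent_bool hq, ent_bool (hk true), ← hq1, hb_one_sub]
  simp only [hb_eq_binEntropy_div_log, mul_div_assoc', ← add_div]
  rw [mix, Fintype.sum_bool, add_comm, ← hq1]
  exact div_le_div_of_nonneg_right hle (Real.log_nonneg one_le_two)

end BinaryEntropy

/-! ### Scheme-2 laws over an arbitrary channel -/

namespace AuxLawD2

variable {𝒳₁ 𝒳₂ 𝒮 𝒴 𝒵 : Type} [Fintype 𝒳₁] [Fintype 𝒳₂] [Fintype 𝒮] [Fintype 𝒴] [Fintype 𝒵]
  (L : AuxLawD2 𝒳₁ 𝒳₂ 𝒮 𝒴 𝒵)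

/-- The joint mass function of the auxiliary variables, arranged as `((U, U2), U1)`. -/
def auxPmf : (L.U × L.U2) × L.U1 → ℝ := compProd (compProd L.PU L.PU2) fun c => L.PU1 c.1

/-- The conditional mass function of the channel outputs `(Y, Z)` given `(((U, U2), U1), S)`. -/
def outputKernel (W : 𝒳₁ → 𝒳₂ → 𝒮 → 𝒴 × 𝒵 → ℝ) (t : ((L.U × L.U2) × L.U1) × 𝒮) :
    𝒴 × 𝒵 → ℝ :=
  mix (compProd (L.PX1 t.1.1.1 t.1.2 t.2) fun _ => L.PX2 t.1.1.1 t.1.1.2 t.2)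
    fun x => W x.1 x.2 t.2

lemma isPmf_compProd_PU_PU2 : IsPmf (compProd L.PU L.PU2) := L.hPU.compProd L.hPU2

lemma isPmf_auxPmf : IsPmf L.auxPmf := L.isPmf_compProd_PU_PU2.compProd fun c => L.hPU1 c.1

variable {PS : 𝒮 → ℝ} {W : 𝒳₁ → 𝒳₂ → 𝒮 → 𝒴 × 𝒵 → ℝ}

lemma isKernel_outputKernel (hW : ∀ x1 x2 s, IsPmf (W x1 x2 s)) :
    IsKernel (L.outputKernel W) := fun t =>
  ((L.hPX1 t.1.1.1 t.1.2 t.2).compProd fun _ => L.hPX2 t.1.1.1 t.1.1.2 t.2).mix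
    fun x => hW x.1 x.2 t.2

lemma joint_nonneg (hPS : IsPmf PS) (hW : ∀ x1 x2 s, IsPmf (W x1 x2 s)) (ω) :
    0 ≤ L.joint PS W ω := by
  have hS := hPS.1 ω.s
  have hU := L.hPU.1 ω.u
  have hU1 := (L.hPU1 ω.u).1 ω.u1
  have hU2 := (L.hPU2 ω.u).1 ω.u2
  have hX1 := (L.hPX1 ω.u ω.u1 ω.s).1 ω.x1
  have hX2 := (L.hPX2 ω.u ω.u2 ω.s).1 ω.x2
  have hYZ := (hW ω.x1 ω.x2 ω.s).1 (ω.y, ω.z)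
  simp only [AuxLawD2.joint, jointD2]
  positivity

lemma law_joint [DecidableEq 𝒮] [DecidableEq 𝒴] [DecidableEq 𝒵] :
    law (L.joint PS W) (fun ω => ((((ω.u, ω.u2), ω.u1), ω.s), (ω.y, ω.z))) =
      compProd (compProd L.auxPmf fun _ => PS) (L.outputKernel W) := by
  ext ⟨⟨⟨⟨u, u2⟩, u1⟩, s⟩, ⟨y, z⟩⟩
  simp only [law, AuxLawD2.joint, jointD2, O8.s, O8.u, O8.u1, O8.u2, O8.x1, O8.x2, O8.y, O8.z,
    Fintype.sum_prod_type, Prod.mk.injEq, ite_and, Finset.sum_ite_irrel, Finset.sum_const_zero,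
    Finset.sum_ite_eq', Finset.mem_univ, if_true, compProd, auxPmf, outputKernel, mix,
    Finset.mul_sum]
  exact Finset.sum_congr rfl fun x1 _ => Finset.sum_congr rfl fun x2 _ => by ring

variable (hPS : IsPmf PS) (hW : ∀ x1 x2 s, IsPmf (W x1 x2 s))
include hPS hW

lemma sum_joint : ∑ ω, L.joint PS W ω = 1 := by
  classical
  rw [← sum_law _ fun ω => ((((ω.u, ω.u2), ω.u1), ω.s), (ω.y, ω.z)), L.law_joint]
  exact ((L.isPmf_auxPmf.compProd fun _ => hPS).compProd (L.isKernel_outputKernel hW)).2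

lemma MI_aux_state_eq_zero [DecidableEq 𝒮] :
    MI (L.joint PS W) (fun ω => ((ω.u, ω.u2), ω.u1)) (fun ω => ω.s) = 0 := by
  classical
  exact MI_eq_zero_of_law_eq_compProd_const
    (law_fst_of_law_eq_compProd L.law_joint fun t => (L.isKernel_outputKernel hW t).2)
    L.isPmf_auxPmf.2 hPS.2

lemma sum_rate_identity [DecidableEq 𝒮] [DecidableEq 𝒴] :
    MI (L.joint PS W) (fun ω => (ω.s, ω.u, ω.u1, ω.u2)) (fun ω => ω.y) -
        H (L.joint PS W) (fun ω => ω.s) =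
      MI (L.joint PS W) (fun ω => (ω.u, ω.u1, ω.u2)) (fun ω => ω.y) -
        Hc (L.joint PS W) (fun ω => ω.s) (fun ω => (ω.y, ω.u, ω.u1, ω.u2)) := by
  refine MI_prod_sub_H_of_MI_eq_zero (Eq.trans ?_ (L.MI_aux_state_eq_zero hPS hW)) _
  exact MI_congr (fun ω ω' => by simp only [Prod.mk.injEq]; tauto) fun _ _ => Iff.rfl

/-- By independence of `S` and `(U, U1, U2)`, the second bound on `R1` in scheme 2 involves `S`
only through `H(S)` and through the conditioning on the true state. -/
lemma secrecy_rate_eq [DecidableEq 𝒮] [DecidableEq 𝒴] :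
    cMI (L.joint PS W) (fun ω => ω.u1) (fun ω => ω.y) (fun ω => (ω.u, ω.u2)) -
        Hc (L.joint PS W) (fun ω => ω.s) (fun ω => (ω.u, ω.u1, ω.u2, ω.y)) =
      Hc (L.joint PS W) (fun ω => ω.y) (fun ω => (ω.u, ω.u2)) -
        H (L.joint PS W) (fun ω => ω.s) -
        Hc (L.joint PS W) (fun ω => ω.y) (fun ω => (((ω.u, ω.u2), ω.u1), ω.s)) := by
  have hS : Hc (L.joint PS W) (fun ω => ω.s) (fun ω => (ω.u, ω.u1, ω.u2, ω.y)) =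
      Hc (L.joint PS W) (fun ω => ω.s) (fun ω => (((ω.u, ω.u2), ω.u1), ω.y)) :=
    Hc_congr fun ω ω' => by simp only [Prod.mk.injEq]; tauto
  rw [hS, cMI_sub_Hc_of_MI_eq_zero (L.MI_aux_state_eq_zero hPS hW)]

end AuxLawD2

/-! ### Passing between the two schemes -/

section LossyDescription

variable {𝒳₁ 𝒳₂ 𝒮 𝒴 𝒵 : Type} [Fintype 𝒳₁] [Fintype 𝒳₂] [Fintype 𝒮] [Fintype 𝒴] [Fintype 𝒵]
  {PS : 𝒮 → ℝ} {W : 𝒳₁ → 𝒳₂ → 𝒮 → 𝒴 × 𝒵 → ℝ}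

/-- The scheme-2 law obtained from a scheme-1 law by forgetting the lossy description `V`. -/
abbrev AuxLawR1.forgetV (L : AuxLawR1 𝒳₁ 𝒳₂ 𝒮 𝒴 𝒵) : AuxLawD2 𝒳₁ 𝒳₂ 𝒮 𝒴 𝒵 where
  U := L.U
  U1 := L.U1
  U2 := L.U2
  PU := L.PU
  PU1 := L.PU1
  PU2 := L.PU2
  PX1 := L.PX1
  PX2 := L.PX2
  hPU := L.hPU
  hPU1 := L.hPU1
  hPU2 := L.hPU2
  hPX1 := L.hPX1
  hPX2 := L.hPX2

/-- The scheme-1 law extending a scheme-2 law by the deterministic description `V = f(S)`. -/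
abbrev AuxLawD2.addV (L : AuxLawD2 𝒳₁ 𝒳₂ 𝒮 𝒴 𝒵) {V : Type} [Fintype V] [DecidableEq V]
    (f : 𝒮 → V) : AuxLawR1 𝒳₁ 𝒳₂ 𝒮 𝒴 𝒵 where
  V := V
  U := L.U
  U1 := L.U1
  U2 := L.U2
  PV := fun s => Pi.single (f s) 1
  PU := L.PU
  PU1 := L.PU1
  PU2 := L.PU2
  PX1 := L.PX1
  PX2 := L.PX2
  hPV := fun s => isPmf_single (f s)
  hPU := L.hPU
  hPU1 := L.hPU1
  hPU2 := L.hPU2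
  hPX1 := L.hPX1
  hPX2 := L.hPX2

lemma AuxLawR1.joint_mk (L : AuxLawR1 𝒳₁ 𝒳₂ 𝒮 𝒴 𝒵) (v : L.V)
    (ω : O8 L.U L.U1 L.U2 𝒳₁ 𝒳₂ 𝒮 𝒴 𝒵) :
    L.joint PS W (v, ω) = L.PV ω.s v * L.forgetV.joint PS W ω := by
  simp only [AuxLawR1.joint, AuxLawD2.joint, jointR1, jointD2, O9.s, O9.v, O9.u, O9.u1, O9.u2,
    O9.x1, O9.x2, O9.y, O9.z, O8.s, O8.u, O8.u1, O8.u2, O8.x1, O8.x2, O8.y, O8.z]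
  ring

variable {α : Type*} [DecidableEq α]

lemma AuxLawR1.law_forgetV (L : AuxLawR1 𝒳₁ 𝒳₂ 𝒮 𝒴 𝒵)
    (X : O8 L.U L.U1 L.U2 𝒳₁ 𝒳₂ 𝒮 𝒴 𝒵 → α) :
    law (L.forgetV.joint PS W) X = law (L.joint PS W) fun ω => X ω.2 := by
  ext a
  simp only [law, Fintype.sum_prod_type_right, L.joint_mk, Finset.sum_ite_irrel,
    Finset.sum_const_zero, ← Finset.sum_mul, (L.hPV _).2, one_mul]

lemma AuxLawD2.law_addV (L : AuxLawD2 𝒳₁ 𝒳₂ 𝒮 𝒴 𝒵) {V : Type} [Fintype V] [DecidableEq V]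
    (f : 𝒮 → V) (X : O9 V L.U L.U1 L.U2 𝒳₁ 𝒳₂ 𝒮 𝒴 𝒵 → α) :
    law ((L.addV f).joint PS W) X = law (L.joint PS W) fun ω => X (f ω.s, ω) := by
  ext a
  rw [law, Fintype.sum_prod_type_right, law]
  refine Finset.sum_congr rfl fun ω _ => ?_
  have hjoint (v : V) : (L.addV f).joint PS W (v, ω) =
      if v = f (O8.s ω) then L.joint PS W ω else 0 := by
    calc (L.addV f).joint PS W (v, ω)
        = (Pi.single (f (O8.s ω)) 1 : V → ℝ) v * L.joint PS W ω := (L.addV f).joint_mk v ω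
      _ = _ := by rw [Pi.single_apply, ite_mul, one_mul, zero_mul]
  rw [Fintype.sum_eq_single (f (O8.s ω)) fun v hv => by rw [hjoint, if_neg hv, ite_self], hjoint,
    if_pos rfl]

lemma AuxLawR1.cMI_forgetV {β γ : Type*} [Fintype α] [Fintype β] [Fintype γ] [DecidableEq β]
    [DecidableEq γ] (L : AuxLawR1 𝒳₁ 𝒳₂ 𝒮 𝒴 𝒵) (A : O8 L.U L.U1 L.U2 𝒳₁ 𝒳₂ 𝒮 𝒴 𝒵 → α)
    (B : O8 L.U L.U1 L.U2 𝒳₁ 𝒳₂ 𝒮 𝒴 𝒵 → β) (C : O8 L.U L.U1 L.U2 𝒳₁ 𝒳₂ 𝒮 𝒴 𝒵 → γ) :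
    cMI (L.forgetV.joint PS W) A B C =
      cMI (L.joint PS W) (fun ω => A ω.2) (fun ω => B ω.2) fun ω => C ω.2 := by
  simp only [cMI, Hc, H, L.law_forgetV]

variable [DecidableEq 𝒮] [DecidableEq 𝒴] [DecidableEq 𝒵]

lemma AuxLawD2.mem_regionD12_addV (L : AuxLawD2 𝒳₁ 𝒳₂ 𝒮 𝒴 𝒵) {V : Type} [Fintype V]
    [DecidableEq V] (f : 𝒮 → V) {R : ℝ × ℝ} :
    R ∈ regionD12 ((L.addV f).joint PS W) ↔ 0 ≤ R.1 ∧ 0 ≤ R.2 ∧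
      R.2 ≤ min (MI (L.joint PS W) (fun ω => f ω.s) (fun ω => ω.y) -
          MI (L.joint PS W) (fun ω => f ω.s) (fun ω => (ω.z, ω.u, ω.u2)))
        (cMI (L.joint PS W) (fun ω => ω.u1) (fun ω => ω.y) (fun ω => (ω.u, ω.u2, f ω.s))) ∧
      R.1 + R.2 ≤ MI (L.joint PS W) (fun ω => (f ω.s, ω.u, ω.u1, ω.u2)) (fun ω => ω.y) -
        MI (L.joint PS W) (fun ω => f ω.s) (fun ω => ω.s) := by
  simp only [regionD12, RSKD, MI, cMI, Hc, H, L.law_addV]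
  rfl

/-- Scheme 1 uses the same law with a constant description `V`. -/
lemma mem_RegionD12_of_mem_RegionD22 (hPS : IsPmf PS) (hW : ∀ x1 x2 s, IsPmf (W x1 x2 s))
    {R : ℝ × ℝ} (hR : R ∈ RegionD22 PS W) (hR2 : R.2 = 0) : R ∈ RegionD12 PS W := by
  obtain ⟨L, hR0, hR1, -, hsum⟩ := hR
  have hp := L.joint_nonneg hPS hW
  have hconst {β : Type} [Fintype β] [DecidableEq β] (Y : _ → β) :
      MI (L.joint PS W) (fun _ => ()) Y = 0 := MI_const (L.sum_joint hPS hW) () Y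
  refine ⟨L.addV fun _ => (), (L.mem_regionD12_addV _).2 ⟨hR0, hR1, ?_, ?_⟩⟩
  · rw [hconst, hconst, sub_self, hR2]
    exact le_min le_rfl (cMI_nonneg hp _ _ _)
  · have hH := Hc_nonneg hp (fun ω => ω.s) fun ω => (ω.u, ω.u1, ω.u2, ω.y)
    rw [hconst, sub_zero, MI_congr (A' := fun ω => (ω.u, ω.u1, ω.u2)) _ fun _ _ => Iff.rfl]
    · exact hsum.trans (sub_le_self _ hH)
    · simp only [Prod.mk.injEq, true_and, implies_true]

end LossyDescription

/-! ### The switched channel of Example 2 -/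

lemma Wex3_eq_single (x1 x2 s : Bool) : Wex3 x1 x2 s = Pi.single (cond s x2 x1, x1) 1 := by
  ext ⟨y, z⟩
  simp only [Wex3, Pi.single_apply, Prod.mk.injEq]

lemma isPmf_Wex3 (x1 x2 s : Bool) : IsPmf (Wex3 x1 x2 s) := by
  rw [Wex3_eq_single]
  exact isPmf_single _

namespace AuxLawD2

variable (L : AuxLawD2 Bool Bool Bool Bool Bool)

/-- The conditional mass function of `Y` given `(((U, U2), U1), S)` on the switched channel. -/
def yKernel (t : ((L.U × L.U2) × L.U1) × Bool) : Bool → ℝ :=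
  if t.2 then L.PX2 t.1.1.1 t.1.1.2 true else L.PX1 t.1.1.1 t.1.2 false

/-- The conditional mass function of `Z` given `(((U, U2), U1), S)` on the switched channel. -/
def zKernel (t : ((L.U × L.U2) × L.U1) × Bool) : Bool → ℝ := L.PX1 t.1.1.1 t.1.2 t.2

lemma isKernel_yKernel : IsKernel L.yKernel
  | (t, true) => L.hPX2 t.1.1 t.1.2 true
  | (t, false) => L.hPX1 t.1.1 t.2 false

lemma isKernel_zKernel : IsKernel L.zKernel := fun t => L.hPX1 t.1.1.1 t.1.2 t.2

lemma outputKernel_Wex3 (t : ((L.U × L.U2) × L.U1) × Bool) :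
    L.outputKernel Wex3 t =
      law (compProd (L.PX1 t.1.1.1 t.1.2 t.2) fun _ => L.PX2 t.1.1.1 t.1.1.2 t.2)
        fun x => (cond t.2 x.2 x.1, x.1) := by
  simp only [outputKernel, Wex3_eq_single, mix_single]

lemma law_outputKernel_Wex3_snd (t : ((L.U × L.U2) × L.U1) × Bool) :
    law (L.outputKernel Wex3 t) (fun yz => yz.2) = L.zKernel t := by
  rw [outputKernel_Wex3, law_law]
  exact law_fst_of_law_eq_compProd (law_id _) fun _ => (L.hPX2 _ _ _).2

lemma law_outputKernel_Wex3_fst (t : ((L.U × L.U2) × L.U1) × Bool) :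
    law (L.outputKernel Wex3 t) (fun yz => yz.1) = L.yKernel t := by
  rw [outputKernel_Wex3, law_law]
  rw [law_cond_compProd_const (L.hPX1 _ _ _).2 (L.hPX2 _ _ _).2]
  obtain ⟨t, _ | _⟩ := t <;> rfl

variable {PS : Bool → ℝ}

lemma law_joint_y :
    law (L.joint PS Wex3) (fun ω => ((((ω.u, ω.u2), ω.u1), ω.s), ω.y)) =
      compProd (compProd L.auxPmf fun _ => PS) L.yKernel := by
  simp only [law_prod_map_of_law_eq_compProd L.law_joint fun _ yz => yz.1,
    law_outputKernel_Wex3_fst]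

lemma law_joint_z :
    law (L.joint PS Wex3) (fun ω => ((((ω.u, ω.u2), ω.u1), ω.s), ω.z)) =
      compProd (compProd L.auxPmf fun _ => PS) L.zKernel := by
  simp only [law_prod_map_of_law_eq_compProd L.law_joint fun _ yz => yz.2,
    law_outputKernel_Wex3_snd]

/-! ### Comparison of the two receivers -/

lemma cMI_u1_eq_sum {β : Type} [Fintype β] [DecidableEq β]
    {B : O8 L.U L.U1 L.U2 Bool Bool Bool Bool Bool → β}
    {k : ((L.U × L.U2) × L.U1) × Bool → β → ℝ} (hk : IsKernel k)
    (h : law (L.joint PS Wex3) (fun ω => ((((ω.u, ω.u2), ω.u1), ω.s), B ω)) =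
      compProd (compProd L.auxPmf fun _ => PS) k) :
    cMI (L.joint PS Wex3) (fun ω => ω.u1) B (fun ω => (ω.s, ω.u, ω.u2)) =
      ∑ c, compProd PS (fun _ => compProd L.PU L.PU2) c *
        (ent (mix (L.PU1 c.2.1) fun u1 => k ((c.2, u1), c.1)) -
          ∑ u1, L.PU1 c.2.1 u1 * ent (k ((c.2, u1), c.1))) := by
  have hlaw : law (L.joint PS Wex3) (fun ω => (((ω.s, ω.u, ω.u2), ω.u1), B ω)) =
      compProd (compProd (compProd PS fun _ => compProd L.PU L.PU2) fun c => L.PU1 c.2.1)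
        fun x => k ((x.1.2, x.2), x.1.1) := by
    ext ⟨⟨⟨s, u, u2⟩, u1⟩, b⟩
    refine (law_apply_congr fun ω => ?_).trans <|
      (congrFun h ((((u, u2), u1), s), b)).trans ?_
    · simp only [Prod.mk.injEq]
      tauto
    · simp only [compProd, auxPmf]
      ring
  rw [cMI_eq_sum hlaw (fun c => (L.hPU1 c.2.1).2) fun x => (hk _).2]

/-- Given `S = 0` both receivers see `X1`, and given `S = 1` the output `Y = X2` carries no
information on `U1`. -/
lemma cMI_u1_y_le_cMI_u1_z (hPS : IsPmf PS) :
    cMI (L.joint PS Wex3) (fun ω => ω.u1) (fun ω => ω.y) (fun ω => (ω.s, ω.u, ω.u2)) ≤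
      cMI (L.joint PS Wex3) (fun ω => ω.u1) (fun ω => ω.z) (fun ω => (ω.s, ω.u, ω.u2)) := by
  rw [L.cMI_u1_eq_sum L.isKernel_yKernel L.law_joint_y,
    L.cMI_u1_eq_sum L.isKernel_zKernel L.law_joint_z]
  refine Finset.sum_le_sum fun ⟨s, u, u2⟩ _ => mul_le_mul_of_nonneg_left ?_
    ((hPS.compProd fun _ => L.isPmf_compProd_PU_PU2).1 _)
  cases s
  · rfl
  · have hy : ent (mix (L.PU1 u) fun u1 => L.yKernel (((u, u2), u1), true)) -
        ∑ u1, L.PU1 u u1 * ent (L.yKernel (((u, u2), u1), true)) = 0 := by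
      simp only [yKernel, if_true, mix_const (L.hPU1 u).2, ← Finset.sum_mul, (L.hPU1 u).2,
        one_mul, sub_self]
    rw [hy]
    exact sub_nonneg.2 (sum_mul_ent_le_ent_mix (L.hPU1 u) fun u1 => (L.isKernel_zKernel _).1)

end AuxLawD2

lemma AuxLawR1.cMI_u1_y_le_cMI_u1_z (L : AuxLawR1 Bool Bool Bool Bool Bool) {PS : Bool → ℝ}
    (hPS : IsPmf PS) :
    cMI (L.joint PS Wex3) (fun ω => ω.u1) (fun ω => ω.y) (fun ω => (ω.s, ω.u, ω.u2)) ≤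
      cMI (L.joint PS Wex3) (fun ω => ω.u1) (fun ω => ω.z) (fun ω => (ω.s, ω.u, ω.u2)) := by
  have h := L.forgetV.cMI_u1_y_le_cMI_u1_z hPS
  rwa [L.cMI_forgetV, L.cMI_forgetV] at h

/-! ### Scheme 2 carries no confidential message -/

namespace AuxLawD2

variable (L : AuxLawD2 Bool Bool Bool Bool Bool) {PS : Bool → ℝ}

lemma H_state : H (L.joint PS Wex3) (fun ω => ω.s) = ent PS := by
  have h := law_fst_of_law_eq_compProd L.law_joint_y (p := L.joint PS Wex3)
    fun t => (L.isKernel_yKernel t).2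
  rw [H, law_snd_of_law_eq_compProd h, mix_const L.isPmf_auxPmf.2]

lemma Hc_y_eq_sum (hPS : IsPmf PS) :
    Hc (L.joint PS Wex3) (fun ω => ω.y) (fun ω => (ω.u, ω.u2)) =
      ∑ c, compProd L.PU L.PU2 c *
        ent (mix (L.PU1 c.1) fun u1 => mix PS fun s => L.yKernel ((c, u1), s)) :=
  Hc_eq_sum (law_outer_of_law_eq_compProd (law_outer_of_law_eq_compProd L.law_joint_y))
    fun c => sum_mix (L.hPU1 c.1).2 fun _ => sum_mix hPS.2 fun _ => (L.isKernel_yKernel _).2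

lemma Hc_y_state_eq_sum :
    Hc (L.joint PS Wex3) (fun ω => ω.y) (fun ω => (((ω.u, ω.u2), ω.u1), ω.s)) =
      ∑ c, compProd L.PU L.PU2 c *
        ∑ u1, L.PU1 c.1 u1 * ∑ s, PS s * ent (L.yKernel ((c, u1), s)) := by
  rw [Hc_eq_sum L.law_joint_y fun t => (L.isKernel_yKernel t).2]
  simp only [Fintype.sum_prod_type, compProd, auxPmf, Finset.mul_sum, mul_assoc]

/-- The conditional law of `Y` given `(U, U2)` is a mixture over `S` whose component `S = 1` does
not depend on `U1` and has weight at least `1/2`. -/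
lemma ent_mix_yKernel_le (hPS : IsPmf PS) (h : 1 / 2 ≤ PS true) (c : L.U × L.U2) :
    ent (mix (L.PU1 c.1) fun u1 => mix PS fun s => L.yKernel ((c, u1), s)) ≤
      ent PS + ∑ u1, L.PU1 c.1 u1 * ∑ s, PS s * ent (L.yKernel ((c, u1), s)) := by
  have hU1 := L.hPU1 c.1
  have hcomm : mix (L.PU1 c.1) (fun u1 => mix PS fun s => L.yKernel ((c, u1), s)) =
      mix PS fun s => mix (L.PU1 c.1) fun u1 => L.yKernel ((c, u1), s) := mix_comm _ _ _
  have htrue : mix (L.PU1 c.1) (fun u1 => L.yKernel ((c, u1), true)) = L.PX2 c.1 c.2 true := by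
    simp only [yKernel, if_true, mix_const hU1.2]
  calc ent (mix (L.PU1 c.1) fun u1 => mix PS fun s => L.yKernel ((c, u1), s))
      ≤ ent PS + PS true * ent (L.PX2 c.1 c.2 true) := by
        rw [hcomm, ← htrue]
        exact ent_mix_bool_le hPS (fun s => hU1.mix fun u1 => L.isKernel_yKernel _) h
    _ = ent PS + ∑ u1, L.PU1 c.1 u1 * (PS true * ent (L.yKernel ((c, u1), true))) := by
        simp only [yKernel, if_true, ← Finset.sum_mul, hU1.2, one_mul]
    _ ≤ _ := by
        gcongr with u1
        · exact hU1.1 u1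
        · rw [Fintype.sum_bool]
          exact le_add_of_nonneg_right
            (mul_nonneg (hPS.1 false) (ent_nonneg (L.isKernel_yKernel _)))

lemma secrecy_rate_nonpos (hPS : IsPmf PS) (h : 1 / 2 ≤ PS true) :
    cMI (L.joint PS Wex3) (fun ω => ω.u1) (fun ω => ω.y) (fun ω => (ω.u, ω.u2)) -
      Hc (L.joint PS Wex3) (fun ω => ω.s) (fun ω => (ω.u, ω.u1, ω.u2, ω.y)) ≤ 0 := by
  have hc := L.isPmf_compProd_PU_PU2
  rw [L.secrecy_rate_eq hPS isPmf_Wex3, L.H_state, L.Hc_y_eq_sum hPS, L.Hc_y_state_eq_sum,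
    sub_sub, sub_nonpos, ← one_mul (ent PS), ← hc.2, Finset.sum_mul, ← Finset.sum_add_distrib]
  refine Finset.sum_le_sum fun c _ => ?_
  rw [← mul_add]
  exact mul_le_mul_of_nonneg_left (L.ent_mix_yKernel_le hPS h c) (hc.1 c)

end AuxLawD2

lemma snd_eq_zero_of_mem_RegionD22 {PS : Bool → ℝ} (hPS : IsPmf PS) (h : 1 / 2 ≤ PS true)
    {R : ℝ × ℝ} (hR : R ∈ RegionD22 PS Wex3) : R.2 = 0 := by
  obtain ⟨L, -, hR2, hle, -⟩ := hR
  exact le_antisymm ((hle.trans (min_le_right _ _)).trans (L.secrecy_rate_nonpos hPS h)) hR2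

/-! ### Uncoded transmission attains a positive confidential rate in scheme 1 -/

section UncodedTransmission

variable {PS : Bool → ℝ}

lemma IsPmf.comp_not {q : Bool → ℝ} (hq : IsPmf q) : IsPmf fun b => q !b :=
  ⟨fun b => hq.1 !b, by simpa [add_comm] using hq.2⟩

lemma ent_comp_not (q : Bool → ℝ) : (ent fun b => q !b) = ent q := by
  simp [ent, add_comm]

/-- The scheme-2 law in which `U` is trivial, `U1 = X1` is distributed as the state and `U2 = X2`
as its negation. -/
abbrev uncodedLaw (hPS : IsPmf PS) : AuxLawD2 Bool Bool Bool Bool Bool where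
  U := Unit
  U1 := Bool
  U2 := Bool
  PU := Pi.single () 1
  PU1 := fun _ => PS
  PU2 := fun _ b => PS !b
  PX1 := fun _ u1 _ => Pi.single u1 1
  PX2 := fun _ u2 _ => Pi.single u2 1
  hPU := isPmf_single ()
  hPU1 := fun _ => hPS
  hPU2 := fun _ => hPS.comp_not
  hPX1 := fun _ u1 _ => isPmf_single u1
  hPX2 := fun _ u2 _ => isPmf_single u2

/-- The joint mass function of `(S, X1, X2)` under `uncodedLaw`. -/
def uncodedPmf (PS : Bool → ℝ) : Bool × Bool × Bool → ℝ :=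
  compProd PS fun _ => compProd PS fun _ b => PS !b

/-- The values of all variables under `uncodedLaw` as functions of `(S, X1, X2)`. -/
def uncodedOutcome (t : Bool × Bool × Bool) : O8 Unit Bool Bool Bool Bool Bool Bool Bool :=
  ((), t.2.1, t.2.2, t.2.1, t.2.2, t.1, cond t.1 t.2.2 t.2.1, t.2.1)

lemma law_joint_uncodedLaw (hPS : IsPmf PS) {α : Type*} [DecidableEq α]
    (X : O8 Unit Bool Bool Bool Bool Bool Bool Bool → α) :
    law ((uncodedLaw hPS).joint PS Wex3) X = law (uncodedPmf PS) fun t => X (uncodedOutcome t) := by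
  ext a
  simp only [law, AuxLawD2.joint, jointD2, uncodedLaw, uncodedPmf, compProd, uncodedOutcome,
    O8.s, O8.u, O8.u1, O8.u2, O8.x1, O8.x2, O8.y, O8.z, Wex3_eq_single, Pi.single_apply,
    Fintype.sum_prod_type]
  simp only [Finset.univ_unique, PUnit.default_eq_unit, if_true, mul_one, mul_assoc, mul_ite,
    mul_zero, Prod.mk.injEq, ite_and, Fintype.sum_bool, cond_true, cond_false,
    Bool.false_eq_true, if_false, ite_self, add_zero, Bool.true_eq_false, zero_add,
    Bool.not_true, Bool.not_false, Finset.sum_singleton]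
  ring

lemma H_joint_uncodedLaw (hPS : IsPmf PS) {α : Type*} [Fintype α] [DecidableEq α]
    (X : O8 Unit Bool Bool Bool Bool Bool Bool Bool → α) :
    H ((uncodedLaw hPS).joint PS Wex3) X = H (uncodedPmf PS) fun t => X (uncodedOutcome t) :=
  congrArg ent (law_joint_uncodedLaw hPS X)

lemma MI_joint_uncodedLaw (hPS : IsPmf PS) {α β : Type*} [Fintype α] [Fintype β] [DecidableEq α]
    [DecidableEq β] (A : O8 Unit Bool Bool Bool Bool Bool Bool Bool → α)
    (B : O8 Unit Bool Bool Bool Bool Bool Bool Bool → β) :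
    MI ((uncodedLaw hPS).joint PS Wex3) A B =
      MI (uncodedPmf PS) (fun t => A (uncodedOutcome t)) fun t => B (uncodedOutcome t) := by
  rw [MI, H_joint_uncodedLaw hPS A, H_joint_uncodedLaw hPS B,
    H_joint_uncodedLaw hPS fun ω => (A ω, B ω), ← MI]

lemma cMI_joint_uncodedLaw (hPS : IsPmf PS) {α β γ : Type*} [Fintype α] [Fintype β] [Fintype γ]
    [DecidableEq α] [DecidableEq β] [DecidableEq γ]
    (A : O8 Unit Bool Bool Bool Bool Bool Bool Bool → α)
    (B : O8 Unit Bool Bool Bool Bool Bool Bool Bool → β)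
    (C : O8 Unit Bool Bool Bool Bool Bool Bool Bool → γ) :
    cMI ((uncodedLaw hPS).joint PS Wex3) A B C =
      cMI (uncodedPmf PS) (fun t => A (uncodedOutcome t)) (fun t => B (uncodedOutcome t))
        fun t => C (uncodedOutcome t) := by
  simp only [cMI, Hc]
  rw [H_joint_uncodedLaw hPS C, H_joint_uncodedLaw hPS fun ω => (A ω, C ω),
    H_joint_uncodedLaw hPS fun ω => (B ω, C ω), H_joint_uncodedLaw hPS fun ω => (A ω, B ω, C ω)]

lemma law_uncodedPmf_state_y (hPS : IsPmf PS) :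
    law (uncodedPmf PS) (fun t => (t.1, cond t.1 t.2.2 t.2.1)) =
      compProd PS fun s => cond s (fun b => PS !b) PS := by
  rw [law_prod_map_of_law_eq_compProd (law_id (uncodedPmf PS)) fun s x => cond s x.2 x.1]
  simp only [law_cond_compProd_const hPS.2 hPS.comp_not.2]

lemma law_uncodedPmf_state_x2_x1 :
    law (uncodedPmf PS) (fun t => ((t.1, t.2.2), t.2.1)) =
      compProd (compProd PS fun _ b => PS !b) fun _ => PS := by
  ext ⟨⟨s, x2⟩, x1⟩
  simp only [law, uncodedPmf, compProd, Fintype.sum_prod_type, Prod.mk.injEq, ite_and,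
    Finset.sum_ite_irrel, Finset.sum_const_zero, Finset.sum_ite_eq', Finset.mem_univ, if_true]
  ring

lemma H_uncodedPmf_y (hPS : IsPmf PS) :
    H (uncodedPmf PS) (fun t => cond t.1 t.2.2 t.2.1) = hb (2 * PS false * PS true) := by
  have hk : IsKernel fun s => cond s (fun b => PS !b) PS
    | true => hPS.comp_not
    | false => hPS
  rw [H, law_snd_of_law_eq_compProd (law_uncodedPmf_state_y hPS), ent_bool (hPS.mix hk), mix,
    Fintype.sum_bool]
  congr 1
  simp only [cond_true, cond_false, Bool.not_true]
  ring

lemma H_uncodedPmf_state (hPS : IsPmf PS) : H (uncodedPmf PS) (fun t => t.1) = hb (PS false) := by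
  rw [hb_apply_false hPS, H, law_fst_of_law_eq_compProd (law_id (uncodedPmf PS)) fun _ =>
    (hPS.compProd fun _ => hPS.comp_not).2]

lemma MI_uncodedPmf_state_y (hPS : IsPmf PS) :
    MI (uncodedPmf PS) (fun t => t.1) (fun t => cond t.1 t.2.2 t.2.1) =
      hb (2 * PS false * PS true) - hb (PS false) := by
  have hsum : ∑ s, PS s * ent (cond s (fun b => PS !b) PS) = hb (PS false) := by
    rw [Fintype.sum_bool, cond_true, cond_false, ent_comp_not, ← add_mul, ← Fintype.sum_bool,
      hPS.2, one_mul, hb_apply_false hPS]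
  rw [MI_eq_H_sub_Hc, H_uncodedPmf_y hPS, Hc_eq_sum (law_uncodedPmf_state_y hPS), hsum]
  rintro (_ | _)
  exacts [hPS.2, hPS.comp_not.2]

lemma MI_uncodedPmf_inputs_y (hPS : IsPmf PS) :
    MI (uncodedPmf PS) (fun t => (t.1, (), t.2.1, t.2.2)) (fun t => cond t.1 t.2.2 t.2.1) =
      hb (2 * PS false * PS true) := by
  rw [MI_eq_H_of_comp (fun x : Bool × Unit × Bool × Bool => cond x.1 x.2.2.2 x.2.2.1) fun _ => rfl,
    H_uncodedPmf_y hPS]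

lemma MI_uncodedPmf_state_state (hPS : IsPmf PS) :
    MI (uncodedPmf PS) (fun t => t.1) (fun t => t.1) = hb (PS false) := by
  rw [MI_eq_H_of_comp (fun s => s) fun _ => rfl, H_uncodedPmf_state hPS]

lemma MI_uncodedPmf_state_z (hPS : IsPmf PS) :
    MI (uncodedPmf PS) (fun t => t.1) (fun t => (t.2.1, (), t.2.2)) = 0 := by
  refine MI_eq_zero_of_law_eq_compProd_const
    (law_prod_map_of_law_eq_compProd (law_id (uncodedPmf PS)) fun _ x => (x.1, (), x.2)) hPS.2 ?_
  rw [sum_law]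
  exact (hPS.compProd fun _ => hPS.comp_not).2

lemma cMI_uncodedPmf (hPS : IsPmf PS) :
    cMI (uncodedPmf PS) (fun t => t.2.1) (fun t => cond t.1 t.2.2 t.2.1)
      (fun t => ((), t.2.2, t.1)) = PS false * hb (PS false) := by
  have hlaw := law_prod_map_of_law_eq_compProd (law_uncodedPmf_state_x2_x1 (PS := PS))
    fun c x1 => cond c.1 c.2 x1
  have hfalse : law PS (fun x1 => x1) = PS := law_id PS
  have htrue (x2 : Bool) : ent (law PS fun _ => x2) = 0 := H_const hPS.2 x2
  have hdet : Hc (uncodedPmf PS) (fun t => cond t.1 t.2.2 t.2.1)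
      (fun t => (((), t.2.2, t.1), t.2.1)) = 0 :=
    Hc_eq_zero_of_comp (fun c => cond c.1.2.2 c.1.2.1 c.2) fun _ => rfl
  have hcongr : Hc (uncodedPmf PS) (fun t => cond t.1 t.2.2 t.2.1) (fun t => ((), t.2.2, t.1)) =
      Hc (uncodedPmf PS) (fun t => cond t.1 t.2.2 t.2.1) fun t => (t.1, t.2.2) :=
    Hc_congr fun _ _ => by simp only [Prod.mk.injEq]; tauto
  rw [cMI_eq_Hc_sub_Hc, hdet, sub_zero, hcongr, Hc_eq_sum hlaw fun c => by rw [sum_law, hPS.2]]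
  simp only [Fintype.sum_prod_type, compProd, mul_assoc, ← Finset.mul_sum]
  rw [Fintype.sum_bool]
  simp only [cond_true, cond_false, htrue, hfalse, mul_zero, Finset.sum_const_zero, zero_add,
    ← Finset.sum_mul, hPS.comp_not.2, one_mul, hb_apply_false hPS]

/-- With `V = S`, the secret-key rate is `I(S;Y)` because `(Z, U, U2)` is independent of `S`. -/
lemma uncoded_mem_RegionD12 (hPS : IsPmf PS) :
    ((0 : ℝ), min (hb (2 * PS false * PS true) - hb (PS false)) (PS false * hb (PS false))) ∈
      RegionD12 PS Wex3 := by
  have hS := (MI_joint_uncodedLaw hPS (fun ω => ω.s) fun ω => ω.s).trans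
    (MI_uncodedPmf_state_state hPS)
  have hSY := (MI_joint_uncodedLaw hPS (fun ω => ω.s) fun ω => ω.y).trans
    (MI_uncodedPmf_state_y hPS)
  have hSZ := (MI_joint_uncodedLaw hPS (fun ω => ω.s) fun ω => (ω.z, ω.u, ω.u2)).trans
    (MI_uncodedPmf_state_z hPS)
  have hXY := (cMI_joint_uncodedLaw hPS (fun ω => ω.u1) (fun ω => ω.y)
    fun ω => (ω.u, ω.u2, ω.s)).trans (cMI_uncodedPmf hPS)
  have hY := (MI_joint_uncodedLaw hPS (fun ω => (ω.s, ω.u, ω.u1, ω.u2)) fun ω => ω.y).trans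
    (MI_uncodedPmf_inputs_y hPS)
  have hrate : 0 ≤ hb (2 * PS false * PS true) - hb (PS false) := by
    rw [← MI_uncodedPmf_state_y hPS]
    exact MI_nonneg (hPS.compProd fun _ => hPS.compProd fun _ => hPS.comp_not) _ _
  have hrate' : 0 ≤ PS false * hb (PS false) :=
    mul_nonneg (hPS.1 false) (by rw [hb_apply_false hPS]; exact ent_nonneg hPS)
  refine ⟨(uncodedLaw hPS).addV fun s => s, ((uncodedLaw hPS).mem_regionD12_addV _).2
    ⟨le_rfl, le_min hrate hrate', le_min ?_ ?_, ?_⟩⟩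
  · exact (min_le_left _ _).trans (congrArg₂ _ hSY hSZ |>.trans (sub_zero _)).ge
  · exact (min_le_right _ _).trans hXY.ge
  · exact (zero_add _).trans_le <| (min_le_left _ _).trans (congrArg₂ _ hY hS).ge

end UncodedTransmission

/-! ### Numerical comparison -/

lemma seventeen_mul_log_le : 17 * Real.log 17 ≤ 20 * Real.log 5 + 24 * Real.log 2 := by
  have h := Real.log_le_log (x := 17 ^ 17) (y := 5 ^ 20 * 2 ^ 24) (by norm_num) (by norm_num)
  rw [Real.log_mul (by norm_num) (by norm_num), Real.log_pow, Real.log_pow, Real.log_pow] at h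
  exact_mod_cast h

lemma binEntropy_div {a n : ℝ} (ha : a ≠ 0) (hn : n ≠ 0) (han : n - a ≠ 0) :
    Real.binEntropy (a / n) =
      Real.log n - (a * Real.log a + (n - a) * Real.log (n - a)) / n := by
  rw [Real.binEntropy_eq_negMulLog_add_negMulLog_one_sub, one_sub_div hn, Real.negMulLog,
    Real.negMulLog, Real.log_div ha hn, Real.log_div han hn]
  field_simp
  ring

lemma fifth_mul_hb_fifth_le : 0.2 * hb 0.2 ≤ hb 0.32 - hb 0.2 := by
  have h4 : Real.log 4 = 2 * Real.log 2 := by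
    rw [show (4 : ℝ) = 2 ^ 2 by norm_num, Real.log_pow, Nat.cast_ofNat]
  have h8 : Real.log 8 = 3 * Real.log 2 := by
    rw [show (8 : ℝ) = 2 ^ 3 by norm_num, Real.log_pow, Nat.cast_ofNat]
  have h25 : Real.log 25 = 2 * Real.log 5 := by
    rw [show (25 : ℝ) = 5 ^ 2 by norm_num, Real.log_pow, Nat.cast_ofNat]
  have h02 : Real.binEntropy 0.2 = Real.log 5 - 8 / 5 * Real.log 2 := by
    rw [show (0.2 : ℝ) = 1 / 5 by norm_num,
      binEntropy_div one_ne_zero (by norm_num) (by norm_num),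
      show (5 - 1 : ℝ) = 4 by norm_num, h4, Real.log_one]
    ring
  have h032 : Real.binEntropy 0.32 =
      2 * Real.log 5 - (24 * Real.log 2 + 17 * Real.log 17) / 25 := by
    rw [show (0.32 : ℝ) = 8 / 25 by norm_num,
      binEntropy_div (by norm_num) (by norm_num) (by norm_num),
      show (25 - 8 : ℝ) = 17 by norm_num, h25, h8]
    ring
  rw [hb_eq_binEntropy_div_log, hb_eq_binEntropy_div_log, mul_div_assoc', ← sub_div, h02, h032]
  gcongr
  linarith [seventeen_mul_log_le]

lemma isPmf_PS08 : IsPmf PS08 := by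
  refine ⟨fun s => ?_, ?_⟩
  · cases s <;> norm_num [PS08]
  · norm_num [PS08]

lemma min_uncoded_rates_PS08 :
    min (hb (2 * PS08 false * PS08 true) - hb (PS08 false)) (PS08 false * hb (PS08 false)) =
      0.2 * hb 0.2 := by
  rw [show 2 * PS08 false * PS08 true = 0.32 by norm_num [PS08],
    show PS08 false = 0.2 from rfl, min_eq_right fifth_mul_hb_fifth_le]

theorem example2_degraded_message_sets_general {PS : Bool → ℝ} (hPS : IsPmf PS)
    (h : 1 / 2 ≤ PS true) :
    (∀ L : AuxLawR1 Bool Bool Bool Bool Bool,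
      cMI (L.joint PS Wex3) (fun ω => ω.u1) (fun ω => ω.y)
          (fun ω => (ω.s, ω.u, ω.u2)) ≤
        cMI (L.joint PS Wex3) (fun ω => ω.u1) (fun ω => ω.z)
          (fun ω => (ω.s, ω.u, ω.u2))) ∧
    (∀ L : AuxLawD2 Bool Bool Bool Bool Bool,
      cMI (L.joint PS Wex3) (fun ω => ω.u1) (fun ω => ω.y)
          (fun ω => (ω.s, ω.u, ω.u2)) ≤
        cMI (L.joint PS Wex3) (fun ω => ω.u1) (fun ω => ω.z)
          (fun ω => (ω.s, ω.u, ω.u2))) ∧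
    (0, min (hb (2 * PS false * PS true) - hb (PS false)) (PS false * hb (PS false))) ∈
      RegionD12 PS Wex3 ∧
    (∀ R ∈ RegionD22 PS Wex3, R.2 = 0) ∧
    (∀ L : AuxLawD2 Bool Bool Bool Bool Bool,
      MI (L.joint PS Wex3) (fun ω => (ω.s, ω.u, ω.u1, ω.u2)) (fun ω => ω.y) -
          H (L.joint PS Wex3) (fun ω => ω.s) =
        MI (L.joint PS Wex3) (fun ω => (ω.u, ω.u1, ω.u2)) (fun ω => ω.y) -
          Hc (L.joint PS Wex3) (fun ω => ω.s) (fun ω => (ω.y, ω.u, ω.u1, ω.u2))) ∧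
    RegionD22 PS Wex3 ⊆ RegionD12 PS Wex3 :=
  ⟨fun L => L.cMI_u1_y_le_cMI_u1_z hPS, fun L => L.cMI_u1_y_le_cMI_u1_z hPS,
    uncoded_mem_RegionD12 hPS, fun _ => snd_eq_zero_of_mem_RegionD22 hPS h,
    fun L => L.sum_rate_identity hPS isPmf_Wex3,
    fun _ hR => mem_RegionD12_of_mem_RegionD22 hPS isPmf_Wex3 hR
      (snd_eq_zero_of_mem_RegionD22 hPS h hR)⟩

/-- **Example 2 (degraded message sets; Coding scheme 1 strictly outperforms Coding
scheme 2).** For the channel `Y = X1` if `S=0`, `Y = X2` if `S=1`, `Z = X1` with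
`Pr{S=1} = 0.8`:
(i) for every admissible joint law (of either scheme), `I(U1;Y|S,U,U2) ≤ I(U1;Z|S,U,U2)`;
(ii) `R^{CSI-E}_{D,12}` contains a point with `R1 = 0.2·h(0.2)`, while every point of
`R^{CSI-E}_{D,22}` has `R1 ≤ log2(1 + 0.2·0.8⁴)`;
(iii) for every admissible scheme-2 law the sum-rate identity
`I(S,U,U1,U2;Y) - H(S) = I(U,U1,U2;Y) - H(S|Y,U,U1,U2)` holds (the `V = S` sum-rate
bound of scheme 1 covers that of scheme 2), and consequently
`R^{CSI-E}_{D,22} ⊆ R^{CSI-E}_{D,12}` for this channel. -/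
theorem example2_degraded_message_sets :
    (∀ L : AuxLawR1 Bool Bool Bool Bool Bool,
      cMI (L.joint PS08 Wex3) (fun ω => ω.u1) (fun ω => ω.y)
          (fun ω => (ω.s, ω.u, ω.u2)) ≤
        cMI (L.joint PS08 Wex3) (fun ω => ω.u1) (fun ω => ω.z)
          (fun ω => (ω.s, ω.u, ω.u2))) ∧
    (∀ L : AuxLawD2 Bool Bool Bool Bool Bool,
      cMI (L.joint PS08 Wex3) (fun ω => ω.u1) (fun ω => ω.y)
          (fun ω => (ω.s, ω.u, ω.u2)) ≤
        cMI (L.joint PS08 Wex3) (fun ω => ω.u1) (fun ω => ω.z)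
          (fun ω => (ω.s, ω.u, ω.u2))) ∧
    (∃ R0 : ℝ, (R0, (0.2 : ℝ) * hb 0.2) ∈ RegionD12 PS08 Wex3) ∧
    (∀ R ∈ RegionD22 PS08 Wex3,
      R.2 ≤ Real.logb 2 (1 + (0.2 : ℝ) * (0.8 : ℝ) ^ (4 : ℕ))) ∧
    (∀ L : AuxLawD2 Bool Bool Bool Bool Bool,
      MI (L.joint PS08 Wex3) (fun ω => (ω.s, ω.u, ω.u1, ω.u2)) (fun ω => ω.y) -
          H (L.joint PS08 Wex3) (fun ω => ω.s) =
        MI (L.joint PS08 Wex3) (fun ω => (ω.u, ω.u1, ω.u2)) (fun ω => ω.y) -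
          Hc (L.joint PS08 Wex3) (fun ω => ω.s) (fun ω => (ω.y, ω.u, ω.u1, ω.u2))) ∧
    RegionD22 PS08 Wex3 ⊆ RegionD12 PS08 Wex3 := by
  obtain ⟨hR1, hD2, hpoint, hsnd, hsum, hsub⟩ :=
    example2_degraded_message_sets_general isPmf_PS08 (by norm_num [PS08])
  exact ⟨hR1, hD2, ⟨0, min_uncoded_rates_PS08 ▸ hpoint⟩,
    fun R hR => (hsnd R hR).trans_le (Real.logb_nonneg one_lt_two (by norm_num)), hsum, hsub⟩

end Paper
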